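/- Let α < 0 and r > 0. For every τ ∈ V_{α,r} with associated extension F of its Laplace transform, and every ε > 0, there exists σ ∈ V_{-∞}, with entire extension G of its Laplace transform, such that sup_{x≥0}|τ'(x) − σ'(x)| + sup_{s∈R̄_{α,r}} |F(s) − G(s)| < ε. That is, V_{-∞} is dense in the Banach space V_{α,r}. -/

import Mathlib

/-!
After a dilation `x ↦ l τ(lx)` with `l > 1` close to `1`, which moves both parts of the norm only
slightly, the extension `F` is analytic on a neighbourhood of the rectangle. Multiply `τ` by
`φ(lx)`, where `l` is small and `φ` is the Fourier transform of a compactly supported bump function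
of integral `1`. This changes `τ'` uniformly little, and it replaces the Laplace transform by an
average of its vertical translates, so it is also uniformly close where `Re s > 0`. Since `φ` decays
rapidly, a compactly supported cutoff then yields a test function `σ`.

The difference `D = F - L{σ; ·}` is analytic near the rectangle and small for `Re s > 0`, hence also
for `Re s ≥ m` with some `m < 0`. Split the Cauchy integral of `D` over a slightly larger rectangle
at `Re z = m`. The part on the right is small. The part on the left is the Laplace transform of a
superposition of exponentials `e^{zx}` with `Re z < 0` and `z` outside the rectangle.

It remains to approximate `e^{zx}` by test functions. For `Re z < α` the Laplace integral converges
on the rectangle and truncation suffices. The other `z` are reached by pole pushing: `z ↦ e^{zx}` is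
holomorphic with values in a Banach space, and the identity theorem in the quotient by the closure
of the test functions shows that it stays in this closure.
-/

open Filter Set MeasureTheory

/-- The Laplace transform `L{f;s} = ∫_0^∞ f(x) e^{-sx} dx`. -/
noncomputable def Laplace (f : ℝ → ℂ) (s : ℂ) : ℂ :=
  ∫ x in Set.Ioi (0 : ℝ), f x * Complex.exp (-(s * (x : ℂ)))

/-- The closed rectangle `R̄_{α,r} = {s : α ≤ Re s ≤ 1, |Im s| ≤ r}`. -/
def Rbar (α r : ℝ) : Set ℂ := {s : ℂ | α ≤ s.re ∧ s.re ≤ 1 ∧ |s.im| ≤ r}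

/-- The open rectangle `R_{α,r} = {s : α < Re s < 1, |Im s| < r}`. -/
def Ropen (α r : ℝ) : Set ℂ := {s : ℂ | α < s.re ∧ s.re < 1 ∧ |s.im| < r}

open scoped Topology SchwartzMap FourierTransform ContDiff BoundedContinuousFunction

section UniformLimits

lemma tendstoUniformlyOn_of_isCompact {X Y E : Type*} [TopologicalSpace X] [TopologicalSpace Y]
    [UniformSpace E] {f : X → Y → E} {s : Set X} {k : Set Y} {q : X} (hk : IsCompact k)
    (hf : ContinuousOn (Function.uncurry f) (s ×ˢ k)) (hq : q ∈ s) :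
    TendstoUniformlyOn f (f q) (𝓝[s] q) k := by
  intro u hu
  obtain ⟨v, hv, huv⟩ := hk.mem_uniformity_of_prod hf hq (symm_le_uniformity hu)
  filter_upwards [hv] with p hp x hx using huv p hp x hx

lemma tendstoUniformlyOn_Ici_zero {ι E : Type*} [NormedAddCommGroup E] {f : ι → ℝ → E}
    {g : ℝ → E} {p : Filter ι} (hg : Tendsto g atTop (𝓝 0))
    (hcompact : ∀ X, TendstoUniformlyOn f g p (Icc 0 X))
    (htail : ∀ ε > 0, ∃ X, ∀ᶠ i in p, ∀ x ≥ X, ‖f i x‖ < ε) :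
    TendstoUniformlyOn f g p (Ici 0) := by
  refine Metric.tendstoUniformlyOn_iff.2 fun ε hε => ?_
  obtain ⟨X₁, hX₁⟩ := htail (ε / 2) (half_pos hε)
  obtain ⟨X₂, hX₂⟩ := eventually_atTop.1 (hg.norm.eventually_lt_const
    (show ‖(0 : E)‖ < ε / 2 by simpa using hε))
  filter_upwards [Metric.tendstoUniformlyOn_iff.1 (hcompact (max X₁ X₂)) ε hε, hX₁]
    with i hcompact htail x hx
  rcases le_total x (max X₁ X₂) with hxX | hxX
  · exact hcompact x ⟨hx, hxX⟩
  · have hfx := htail x ((le_max_left _ _).trans hxX)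
    have hgx := hX₂ x ((le_max_right _ _).trans hxX)
    rw [dist_eq_norm]
    linarith [norm_sub_le (g x) (f i x)]

end UniformLimits

section Laplace

variable {f g : ℝ → ℂ} {s s₀ : ℂ}

/-- Absolute convergence of the Laplace integral of `f` at the point `s`. -/
def LaplaceIntegrable (f : ℝ → ℂ) (s : ℂ) : Prop :=
  IntegrableOn (fun x : ℝ => f x * Complex.exp (-(s * x))) (Ioi 0)

lemma norm_cexp_neg_mul_ofReal (s : ℂ) (x : ℝ) :
    ‖Complex.exp (-(s * x))‖ = Real.exp (-(s.re * x)) := by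
  simp [Complex.norm_exp]

lemma norm_cexp_neg_mul_ofReal_le (h : s₀.re ≤ s.re) {x : ℝ} (hx : 0 ≤ x) :
    ‖Complex.exp (-(s * x))‖ ≤ ‖Complex.exp (-(s₀ * x))‖ := by
  simp only [norm_cexp_neg_mul_ofReal]
  gcongr

lemma norm_laplaceIntegrand_le (h : s₀.re ≤ s.re) {x : ℝ} (hx : 0 ≤ x) :
    ‖f x * Complex.exp (-(s * x))‖ ≤ ‖f x * Complex.exp (-(s₀ * x))‖ := by
  simp only [norm_mul]
  gcongr ‖f x‖ * ?_
  exact norm_cexp_neg_mul_ofReal_le h hx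

lemma LaplaceIntegrable.aestronglyMeasurable (h : LaplaceIntegrable f s) :
    AEStronglyMeasurable f (volume.restrict (Ioi 0)) := by
  have hmul : AEStronglyMeasurable (fun x : ℝ =>
      f x * Complex.exp (-(s * x)) * Complex.exp (s * x)) (volume.restrict (Ioi 0)) :=
    (Integrable.aestronglyMeasurable h).mul (by fun_prop)
  refine hmul.congr (Eventually.of_forall fun x => ?_)
  simp only [mul_assoc, ← Complex.exp_add, neg_add_cancel, Complex.exp_zero, mul_one]

lemma LaplaceIntegrable.mono (h : LaplaceIntegrable f s₀) (hs : s₀.re ≤ s.re) :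
    LaplaceIntegrable f s :=
  Integrable.mono h (h.aestronglyMeasurable.mul (by fun_prop))
    (ae_restrict_of_forall_mem measurableSet_Ioi fun _ hx =>
      norm_laplaceIntegrand_le hs (mem_Ioi.1 hx).le)

lemma LaplaceIntegrable.mul_bdd (hf : LaplaceIntegrable f s) (hg : Continuous g) {C : ℝ}
    (hC : ∀ x, ‖g x‖ ≤ C) : LaplaceIntegrable (fun x => f x * g x) s := by
  simpa only [LaplaceIntegrable, IntegrableOn, mul_right_comm] using
    Integrable.mul_bdd hf hg.aestronglyMeasurable (Eventually.of_forall hC)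

lemma laplace_add (hf : LaplaceIntegrable f s) (hg : LaplaceIntegrable g s) :
    Laplace (fun x => f x + g x) s = Laplace f s + Laplace g s := by
  simpa only [Laplace, add_mul] using integral_add hf hg

lemma laplace_sub (hf : LaplaceIntegrable f s) (hg : LaplaceIntegrable g s) :
    Laplace (fun x => f x - g x) s = Laplace f s - Laplace g s := by
  simpa only [Laplace, sub_mul] using integral_sub hf hg

lemma laplace_const_mul (c : ℂ) (f : ℝ → ℂ) (s : ℂ) :
    Laplace (fun x => c * f x) s = c * Laplace f s := by
  simpa only [Laplace, mul_assoc] using integral_const_mul c _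

lemma norm_laplace_le (h : LaplaceIntegrable f s₀) (hs : s₀.re ≤ s.re) :
    ‖Laplace f s‖ ≤ ∫ x in Ioi (0 : ℝ), ‖f x * Complex.exp (-(s₀ * x))‖ :=
  norm_integral_le_of_norm_le (Integrable.norm h)
    (ae_restrict_of_forall_mem measurableSet_Ioi fun _ hx =>
      norm_laplaceIntegrand_le hs (mem_Ioi.1 hx).le)

lemma LaplaceIntegrable.differentiableAt_laplace (h : LaplaceIntegrable f s₀)
    (hs : s₀.re < s.re) : DifferentiableAt ℂ (Laplace f) s := by
  set δ : ℝ := (s.re - s₀.re) / 2 with hδ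
  have hδ₀ : 0 < δ := by simpa [hδ] using hs
  have hmem : {w : ℂ | s₀.re + δ < w.re} ∈ 𝓝 s :=
    (isOpen_lt continuous_const Complex.continuous_re).mem_nhds
      (show s₀.re + δ < s.re by linarith)
  have hmeas := h.aestronglyMeasurable
  refine (hasDerivAt_integral_of_dominated_loc_of_deriv_le
    (F := fun w (x : ℝ) => f x * Complex.exp (-(w * x)))
    (F' := fun w (x : ℝ) => f x * (Complex.exp (-(w * x)) * -x))
    (bound := fun x : ℝ => ‖f x * Complex.exp (-(s₀ * x))‖ * δ⁻¹) hmem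
    (Eventually.of_forall fun w => hmeas.mul (by fun_prop)) (h.mono hs.le)
    (hmeas.mul (by fun_prop)) ?_ ((Integrable.norm h).mul_const _) ?_).2.differentiableAt
  · refine ae_restrict_of_forall_mem measurableSet_Ioi fun x hx w hw => ?_
    have hx₀ : (0 : ℝ) < x := hx
    have hexp : x * Real.exp (-(w.re * x)) ≤ Real.exp (-(s₀.re * x)) * δ⁻¹ :=
      calc x * Real.exp (-(w.re * x))
          ≤ Real.exp (δ * x) * δ⁻¹ * Real.exp (-((s₀.re + δ) * x)) := by
            gcongr
            · rw [← div_eq_mul_inv, le_div_iff₀ hδ₀, mul_comm]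
              linarith [Real.add_one_le_exp (δ * x)]
            · exact (show s₀.re + δ < w.re from hw).le
        _ = Real.exp (-(s₀.re * x)) * δ⁻¹ := by
            rw [mul_right_comm, ← Real.exp_add]
            ring_nf
    calc ‖f x * (Complex.exp (-(w * x)) * -x)‖
        = ‖f x‖ * (x * Real.exp (-(w.re * x))) := by
          simp [Complex.norm_exp, abs_of_pos hx₀, mul_comm]
      _ ≤ ‖f x‖ * (Real.exp (-(s₀.re * x)) * δ⁻¹) := by gcongr
      _ = ‖f x * Complex.exp (-(s₀ * x))‖ * δ⁻¹ := by
          rw [norm_mul, norm_cexp_neg_mul_ofReal, mul_assoc]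
  · refine Eventually.of_forall fun x w _ => ?_
    have hlin : HasDerivAt (fun w : ℂ => -(w * x)) (-x : ℂ) w := by
      simpa using ((hasDerivAt_id w).mul_const (x : ℂ)).fun_neg
    exact hlin.cexp.const_mul _

lemma laplace_comp_mul_left {l : ℝ} (hl : 0 < l) (f : ℝ → ℂ) (s : ℂ) :
    Laplace (fun x => l * f (l * x)) s = Laplace f (s / l) := by
  have hl' : (l : ℂ) ≠ 0 := by exact_mod_cast hl.ne'
  have hintegrand (x : ℝ) : l * f (l * x) * Complex.exp (-(s * x)) =
      l * (f (l * x) * Complex.exp (-(s / l * (l * x : ℝ)))) := by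
    push_cast
    field_simp
  have hsubst := integral_comp_mul_left_Ioi
    (fun x : ℝ => f x * Complex.exp (-(s / l * x))) 0 hl
  simp only [Laplace, hintegrand, integral_const_mul, hsubst, mul_zero, Complex.real_smul]
  push_cast
  rw [mul_inv_cancel_left₀ hl']

end Laplace

section C0Deriv

/-- `τ` is continuously differentiable on `[0,∞)` with derivative `τ'` vanishing at infinity: the
regularity shared by the members of `V_{α,r}` and `V_{-∞}`. Values at negative arguments are
unconstrained. -/
structure HasC0Deriv (τ τ' : ℝ → ℂ) : Prop where
  hasDerivWithinAt : ∀ x ∈ Ici (0 : ℝ), HasDerivWithinAt τ (τ' x) (Ici 0) x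
  continuousOn_deriv : ContinuousOn τ' (Ici 0)
  tendsto_deriv : Tendsto τ' atTop (𝓝 0)

/-- A test function: a member of `V_{-∞}` that vanishes for large arguments. -/
structure IsTest (σ σ' : ℝ → ℂ) : Prop extends HasC0Deriv σ σ' where
  eventually_eq_zero : σ =ᶠ[atTop] 0

variable {τ τ' σ σ' : ℝ → ℂ}

lemma HasC0Deriv.continuousOn (h : HasC0Deriv τ τ') : ContinuousOn τ (Ici 0) :=
  fun x hx => (h.hasDerivWithinAt x hx).continuousWithinAt

lemma HasC0Deriv.exists_norm_le (h : HasC0Deriv τ τ') {ε : ℝ} (hε : 0 < ε) :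
    ∃ A > 0, ∀ x ≥ 0, ‖τ x‖ ≤ A + ε * x := by
  obtain ⟨X, hX₀, hX⟩ := (eventually_ge_atTop (0 : ℝ)).and
    (eventually_forall_ge_atTop.2 (h.tendsto_deriv.norm.eventually_lt_const
      (show ‖(0 : ℂ)‖ < ε by simpa using hε))) |>.exists
  obtain ⟨C, hC⟩ := (isCompact_Icc (a := (0 : ℝ)) (b := X)).exists_bound_of_continuousOn
    (h.continuousOn.mono Icc_subset_Ici_self)
  refine ⟨max C 1, by positivity, fun x hx => ?_⟩
  have hεX := mul_nonneg hε.le hX₀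
  rcases le_total x X with hxX | hxX
  · linarith [hC x ⟨hx, hxX⟩, le_max_left C 1, mul_nonneg hε.le hx]
  · have hmean := (convex_Ici X).norm_image_sub_le_of_norm_hasDerivWithin_le
      (fun y hy => (h.hasDerivWithinAt y (hX₀.trans hy)).mono (Ici_subset_Ici.2 hX₀))
      (fun y hy => (hX y hy).le) self_mem_Ici (mem_Ici.2 hxX)
    rw [Real.norm_of_nonneg (sub_nonneg.2 hxX)] at hmean
    linarith [hC X ⟨hX₀, le_rfl⟩, le_max_left C 1, norm_sub_norm_le (τ x) (τ X)]

lemma HasC0Deriv.isBigO_id (h : HasC0Deriv τ τ') : τ =O[atTop] fun x : ℝ => x := by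
  obtain ⟨A, hA, hbound⟩ := h.exists_norm_le one_pos
  refine .of_bound (A + 1) ?_
  filter_upwards [eventually_ge_atTop 1] with x hx
  rw [Real.norm_of_nonneg (by linarith)]
  nlinarith [hbound x (by linarith)]

lemma HasC0Deriv.laplaceIntegrable (h : HasC0Deriv τ τ') {s : ℂ} (hs : 0 < s.re) :
    LaplaceIntegrable τ s := by
  have hcont : ContinuousOn (fun x : ℝ => τ x * Complex.exp (-(s * x))) (Ici 0) :=
    h.continuousOn.mul (by fun_prop)
  have hlin : τ =O[atTop] fun x : ℝ => Real.exp (s.re / 2 * x) :=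
    h.isBigO_id.trans (by simpa using (isLittleO_pow_exp_pos_mul_atTop 1 (half_pos hs)).isBigO)
  have hexp : (fun x : ℝ => ‖τ x * Complex.exp (-(s * x))‖) =O[atTop]
      fun x : ℝ => Real.exp (-(s.re / 2) * x) := by
    have hsum (x : ℝ) : s.re / 2 * x + -(s.re * x) = -(s.re / 2) * x := by ring
    simpa only [norm_mul, norm_cexp_neg_mul_ofReal, ← Real.exp_add, hsum] using
      hlin.norm_left.mul (Asymptotics.isBigO_refl (fun x : ℝ => Real.exp (-(s.re * x))) atTop)
  rw [LaplaceIntegrable, IntegrableOn, ← integrable_norm_iff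
    ((hcont.mono Ioi_subset_Ici_self).aestronglyMeasurable measurableSet_Ioi)]
  exact integrable_of_isBigO_exp_neg (half_pos hs) hcont.norm hexp

lemma HasC0Deriv.zero : HasC0Deriv 0 0 :=
  ⟨fun x _ => hasDerivWithinAt_const x _ 0, continuousOn_const, tendsto_const_nhds⟩

lemma HasC0Deriv.add (h : HasC0Deriv τ τ') (h' : HasC0Deriv σ σ') :
    HasC0Deriv (fun x => τ x + σ x) (fun x => τ' x + σ' x) where
  hasDerivWithinAt x hx := (h.hasDerivWithinAt x hx).add (h'.hasDerivWithinAt x hx)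
  continuousOn_deriv := h.continuousOn_deriv.add h'.continuousOn_deriv
  tendsto_deriv := by simpa using h.tendsto_deriv.add h'.tendsto_deriv

lemma HasC0Deriv.const_mul (h : HasC0Deriv τ τ') (c : ℂ) :
    HasC0Deriv (fun x => c * τ x) (fun x => c * τ' x) where
  hasDerivWithinAt x hx := (h.hasDerivWithinAt x hx).const_mul c
  continuousOn_deriv := h.continuousOn_deriv.const_smul c
  tendsto_deriv := by simpa using h.tendsto_deriv.const_mul c

lemma IsTest.zero : IsTest 0 0 := ⟨.zero, .rfl⟩

lemma IsTest.add (h : IsTest τ τ') (h' : IsTest σ σ') :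
    IsTest (fun x => τ x + σ x) (fun x => τ' x + σ' x) :=
  ⟨h.toHasC0Deriv.add h'.toHasC0Deriv, by
    filter_upwards [h.eventually_eq_zero, h'.eventually_eq_zero] with x hx hx'
    simp [hx, hx']⟩

lemma IsTest.const_mul (h : IsTest τ τ') (c : ℂ) :
    IsTest (fun x => c * τ x) (fun x => c * τ' x) :=
  ⟨h.toHasC0Deriv.const_mul c, by
    filter_upwards [h.eventually_eq_zero] with x hx
    simp [hx]⟩

lemma IsTest.laplaceIntegrable (h : IsTest σ σ') (s : ℂ) : LaplaceIntegrable σ s := by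
  have hcont : ContinuousOn (fun x : ℝ => σ x * Complex.exp (-(s * x))) (Ici 0) :=
    h.toHasC0Deriv.continuousOn.mul (by fun_prop)
  obtain ⟨R, hR⟩ := eventually_atTop.1 h.eventually_eq_zero
  refine (hcont.mono Icc_subset_Ici_self).integrableOn_Icc.of_forall_sdiff_eq_zero
    (t := Ioi 0) (s := Icc 0 R) measurableSet_Ioi fun x hx => ?_
  have hRx : R ≤ x := le_of_lt (not_le.1 fun hxR => hx.2 ⟨(mem_Ioi.1 hx.1).le, hxR⟩)
  simp [hR x hRx]

lemma IsTest.differentiable_laplace (h : IsTest σ σ') : Differentiable ℂ (Laplace σ) := fun s =>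
  (h.laplaceIntegrable (s - 1)).differentiableAt_laplace (by simp)

end C0Deriv

section Dilation

variable {τ τ' : ℝ → ℂ}

lemma HasC0Deriv.comp_mul_left (h : HasC0Deriv τ τ') {l : ℝ} (hl : 0 < l) :
    HasC0Deriv (fun x => l * τ (l * x)) (fun x => (l : ℂ) ^ 2 * τ' (l * x)) := by
  have hmaps : MapsTo (fun x : ℝ => l * x) (Ici 0) (Ici 0) := fun x hx => mul_nonneg hl.le hx
  refine ⟨fun x hx => ?_, ?_, ?_⟩
  · have hlin : HasDerivWithinAt (fun x : ℝ => l * x) l (Ici 0) x := by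
      simpa using ((hasDerivAt_id x).const_mul l).hasDerivWithinAt
    have hcomp := ((h.hasDerivWithinAt (l * x) (hmaps hx)).scomp x hlin hmaps).const_mul (l : ℂ)
    refine hcomp.congr_deriv ?_
    rw [Complex.real_smul]
    ring
  · exact continuousOn_const.mul (h.continuousOn_deriv.comp (by fun_prop) hmaps)
  · simpa using (h.tendsto_deriv.comp (tendsto_id.const_mul_atTop hl)).const_mul ((l : ℂ) ^ 2)

lemma HasC0Deriv.tendstoUniformlyOn_comp_mul_left (h : HasC0Deriv τ τ') :
    TendstoUniformlyOn (fun (l : ℝ) x => (l : ℂ) ^ 2 * τ' (l * x)) τ' (𝓝[≥] 1) (Ici 0) := by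
  refine tendstoUniformlyOn_Ici_zero h.tendsto_deriv (fun X => ?_) fun ε hε => ?_
  · have hcont : ContinuousOn
        (Function.uncurry fun (l : ℝ) (x : ℝ) => (l : ℂ) ^ 2 * τ' (l * x)) (Ici 1 ×ˢ Icc 0 X) :=
      ContinuousOn.mul (by fun_prop) (h.continuousOn_deriv.comp (by fun_prop)
        fun p hp => mul_nonneg (zero_le_one.trans hp.1) hp.2.1)
    simpa using tendstoUniformlyOn_of_isCompact isCompact_Icc hcont self_mem_Ici
  · obtain ⟨X, hX₀, hX⟩ := (eventually_ge_atTop (0 : ℝ)).and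
      (eventually_forall_ge_atTop.2 (h.tendsto_deriv.norm.eventually_lt_const
        (show ‖(0 : ℂ)‖ < ε / 4 by simpa using hε))) |>.exists
    refine ⟨X, ?_⟩
    filter_upwards [self_mem_nhdsWithin, nhdsWithin_le_nhds (Iio_mem_nhds one_lt_two)]
      with l (hl₁ : 1 ≤ l) (hl₂ : l < 2) x hx
    rw [norm_mul, norm_pow, Complex.norm_of_nonneg (by linarith)]
    have hsq : l ^ 2 ≤ 4 := by nlinarith
    nlinarith [hX (l * x) (by nlinarith), norm_nonneg (τ' (l * x))]

lemma tendstoUniformlyOn_comp_div {K : Set ℂ} {F : ℂ → ℂ} (hK : IsCompact K)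
    (hKdiv : ∀ l : ℝ, 1 ≤ l → ∀ s ∈ K, s / l ∈ K) (hF : ContinuousOn F K) :
    TendstoUniformlyOn (fun (l : ℝ) s => F (s / l)) F (𝓝[≥] 1) K := by
  have hcont : ContinuousOn (Function.uncurry fun (l : ℝ) s => F (s / l)) (Ici 1 ×ˢ K) :=
    hF.comp (continuousOn_snd.div (by fun_prop) fun p hp =>
      Complex.ofReal_ne_zero.2 (zero_lt_one.trans_le hp.1).ne') fun p hp => hKdiv p.1 hp.1 p.2 hp.2
  simpa using tendstoUniformlyOn_of_isCompact hK hcont self_mem_Ici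

end Dilation

section Cutoff

variable {τ τ' g : ℝ → ℂ} {s s₀ : ℂ}

lemma exists_forall_norm_schwartz_le (φ : 𝓢(ℝ, ℂ)) (k : ℕ) :
    ∃ C > 0, ∀ x : ℝ, |x| ^ k * ‖φ x‖ ≤ C := by
  simpa using φ.decay k 0

lemma tendsto_mul_schwartz_comp_mul_left (hτ : τ =O[atTop] fun x : ℝ => x) (φ : 𝓢(ℝ, ℂ)) {l : ℝ}
    (hl : 0 < l) : Tendsto (fun x => τ x * φ (l * x)) atTop (𝓝 0) := by
  have hφ : (fun x => φ (l * x)) =O[atTop] fun x : ℝ => x ^ (-2 : ℤ) := by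
    have hcomp := (φ.isBigO_cocompact_zpow (-2)).mono atTop_le_cocompact |>.comp_tendsto
      (tendsto_id.const_mul_atTop hl)
    refine hcomp.trans (.of_bound (l ^ (-2 : ℤ)) (Eventually.of_forall fun x => ?_))
    simp [abs_of_pos hl, mul_pow, mul_comm]
  refine (hτ.mul hφ).trans_tendsto (tendsto_inv_atTop_zero.congr' ?_)
  filter_upwards [eventually_ne_atTop 0] with x hx
  field_simp

lemma HasC0Deriv.mul_schwartz (h : HasC0Deriv τ τ') (φ : 𝓢(ℝ, ℂ)) {l : ℝ} (hl : 0 < l) :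
    HasC0Deriv (fun x => τ x * φ (l * x))
      (fun x => τ' x * φ (l * x) + τ x * (l * deriv φ (l * x))) := by
  have hcont : Continuous φ := φ.continuous
  have hcont' : Continuous (deriv φ) := (SchwartzMap.derivCLM ℂ ℂ φ).continuous
  refine ⟨fun x hx => ?_, ?_, ?_⟩
  · have hlin : HasDerivAt (fun x : ℝ => l * x) l x := by
      simpa using (hasDerivAt_id x).const_mul l
    have hcomp : HasDerivAt (fun x => φ (l * x)) (l * deriv φ (l * x)) x :=
      φ.differentiableAt.hasDerivAt.scomp x hlin
    exact (h.hasDerivWithinAt x hx).mul hcomp.hasDerivWithinAt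
  · exact (h.continuousOn_deriv.mul (by fun_prop)).add (h.continuousOn.mul (by fun_prop))
  · obtain ⟨C, -, hC⟩ := exists_forall_norm_schwartz_le φ 0
    have hfst : Tendsto (fun x => τ' x * φ (l * x)) atTop (𝓝 0) :=
      h.tendsto_deriv.zero_mul_isBoundedUnder_le
        ⟨C, eventually_map.2 (Eventually.of_forall fun x => by simpa using hC (l * x))⟩
    have hsnd : Tendsto (fun x => l * (τ x * deriv φ (l * x))) atTop (𝓝 (l * 0)) :=
      (tendsto_mul_schwartz_comp_mul_left h.isBigO_id (SchwartzMap.derivCLM ℂ ℂ φ) hl).const_mul _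
    simpa [mul_left_comm] using hfst.add hsnd

lemma tendstoUniformlyOn_mul_schwartz (hg : ContinuousOn g (Ici 0))
    (hg₀ : Tendsto g atTop (𝓝 0)) {φ : 𝓢(ℝ, ℂ)} (hφ : φ 0 = 1) :
    TendstoUniformlyOn (fun l x => g x * φ (l * x)) g (𝓝 0) (Ici 0) := by
  have hcont : Continuous φ := φ.continuous
  refine tendstoUniformlyOn_Ici_zero hg₀ (fun X => ?_) fun ε hε => ?_
  · have hprod : ContinuousOn (Function.uncurry fun l x => g x * φ (l * x)) (univ ×ˢ Icc 0 X) :=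
      (hg.comp continuousOn_snd fun p hp => hp.2.1).mul (by fun_prop)
    simpa [hφ] using tendstoUniformlyOn_of_isCompact isCompact_Icc hprod (mem_univ 0)
  · obtain ⟨C, hC, hbound⟩ := exists_forall_norm_schwartz_le φ 0
    obtain ⟨X, hX⟩ := eventually_atTop.1 (hg₀.norm.eventually_lt_const
      (show ‖(0 : ℂ)‖ < ε / C by simpa using div_pos hε hC))
    refine ⟨X, Eventually.of_forall fun l x hx => ?_⟩
    calc ‖g x * φ (l * x)‖ ≤ ‖g x‖ * C := by
          rw [norm_mul]
          gcongr
          simpa using hbound (l * x)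
      _ < ε := (lt_div_iff₀ hC).1 (hX x hx)

lemma HasC0Deriv.tendstoUniformlyOn_mul_dilated_schwartz (h : HasC0Deriv τ τ') (ψ : 𝓢(ℝ, ℂ)) :
    TendstoUniformlyOn (fun (l : ℝ) x => τ x * (l * ψ (l * x))) 0 (𝓝[>] 0) (Ici 0) := by
  refine Metric.tendstoUniformlyOn_iff.2 fun ε hε => ?_
  obtain ⟨C₀, hC₀, hψ₀⟩ := exists_forall_norm_schwartz_le ψ 0
  obtain ⟨C₁, hC₁, hψ₁⟩ := exists_forall_norm_schwartz_le ψ 1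
  obtain ⟨A, hA, hτ⟩ := h.exists_norm_le (ε := ε / (2 * C₁)) (by positivity)
  have hsmall : ∀ᶠ l : ℝ in 𝓝[>] 0, l < ε / (2 * A * C₀) :=
    nhdsWithin_le_nhds (Iio_mem_nhds (by positivity))
  filter_upwards [self_mem_nhdsWithin, hsmall] with l (hl : 0 < l) hlε x (hx : 0 ≤ x)
  rw [lt_div_iff₀ (by positivity)] at hlε
  have hψ₀x : ‖ψ (l * x)‖ ≤ C₀ := by simpa using hψ₀ (l * x)
  have hψ₁x : l * x * ‖ψ (l * x)‖ ≤ C₁ := by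
    simpa [abs_of_pos hl, abs_of_nonneg hx] using hψ₁ (l * x)
  rw [Pi.zero_apply, dist_zero_left]
  calc ‖τ x * (l * ψ (l * x))‖
      = ‖τ x‖ * (l * ‖ψ (l * x)‖) := by simp [abs_of_pos hl]
    _ ≤ (A + ε / (2 * C₁) * x) * (l * ‖ψ (l * x)‖) := by
        gcongr
        exact hτ x hx
    _ = A * l * ‖ψ (l * x)‖ + ε / (2 * C₁) * (l * x * ‖ψ (l * x)‖) := by ring
    _ ≤ A * l * C₀ + ε / (2 * C₁) * C₁ := by gcongr
    _ = A * l * C₀ + ε / 2 := by field_simp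
    _ < ε := by linarith

lemma HasC0Deriv.tendstoUniformlyOn_deriv_mul_schwartz (h : HasC0Deriv τ τ') {φ : 𝓢(ℝ, ℂ)}
    (hφ : φ 0 = 1) :
    TendstoUniformlyOn (fun (l : ℝ) x => τ' x * φ (l * x) + τ x * (l * deriv φ (l * x))) τ'
      (𝓝[>] 0) (Ici 0) := by
  have hfst : TendstoUniformlyOn (fun (l : ℝ) x => τ' x * φ (l * x)) τ' (𝓝[>] 0) (Ici 0) :=
    fun u hu => nhdsWithin_le_nhds
      (tendstoUniformlyOn_mul_schwartz h.continuousOn_deriv h.tendsto_deriv hφ u hu)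
  have hsnd := h.tendstoUniformlyOn_mul_dilated_schwartz (SchwartzMap.derivCLM ℂ ℂ φ)
  have hsum := hfst.add hsnd
  rwa [add_zero] at hsum

lemma LaplaceIntegrable.tendsto_integral_norm_mul_comp_mul_left (h : LaplaceIntegrable τ s)
    {ψ : ℝ → ℂ} (hψ : Continuous ψ) {C : ℝ} (hC : ∀ x, ‖ψ x‖ ≤ C) (hψ₀ : ψ 0 = 0) :
    Tendsto (fun l : ℝ => ∫ x in Ioi (0 : ℝ), ‖τ x * ψ (l * x) * Complex.exp (-(s * x))‖)
      (𝓝 0) (𝓝 0) := by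
  have hintegrable (l : ℝ) : LaplaceIntegrable (fun x => τ x * ψ (l * x)) s :=
    h.mul_bdd (by fun_prop) fun x => hC (l * x)
  have hbound (l x : ℝ) : ‖τ x * ψ (l * x) * Complex.exp (-(s * x))‖ ≤
      ‖τ x * Complex.exp (-(s * x))‖ * C := by
    rw [mul_right_comm, norm_mul]
    gcongr
    exact hC (l * x)
  have hlim (x : ℝ) : Tendsto (fun l : ℝ => ‖τ x * ψ (l * x) * Complex.exp (-(s * x))‖)
      (𝓝 0) (𝓝 0) := by
    have hcont : Continuous fun l : ℝ => ‖τ x * ψ (l * x) * Complex.exp (-(s * x))‖ := by fun_prop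
    simpa [hψ₀] using hcont.tendsto 0
  simpa only [integral_zero] using tendsto_integral_filter_of_dominated_convergence _
    (Eventually.of_forall fun l => (Integrable.norm (hintegrable l)).aestronglyMeasurable)
    (Eventually.of_forall fun l => Eventually.of_forall fun x => by simpa using hbound l x)
    ((Integrable.norm h).mul_const C) (Eventually.of_forall hlim)

lemma LaplaceIntegrable.tendstoUniformlyOn_laplace_mul_schwartz (h : LaplaceIntegrable τ s₀)
    {φ : 𝓢(ℝ, ℂ)} (hφ : φ 0 = 1) :
    TendstoUniformlyOn (fun (l : ℝ) s => Laplace (fun x => τ x * φ (l * x)) s) (Laplace τ) (𝓝 0)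
      {s | s₀.re ≤ s.re} := by
  obtain ⟨C, -, hC⟩ := exists_forall_norm_schwartz_le φ 0
  have hcont : Continuous φ := φ.continuous
  have hbound (x : ℝ) : ‖1 - φ x‖ ≤ 1 + C :=
    (norm_sub_le _ _).trans (by simpa using hC x)
  have hlim := h.tendsto_integral_norm_mul_comp_mul_left (ψ := fun x => 1 - φ x) (by fun_prop)
    hbound (by simp [hφ])
  refine Metric.tendstoUniformlyOn_iff.2 fun ε hε => ?_
  filter_upwards [hlim.eventually_lt_const hε] with l hl s (hs : s₀.re ≤ s.re)
  have hmul : LaplaceIntegrable (fun x => τ x * φ (l * x)) s :=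
    (h.mono hs).mul_bdd (C := C) (by fun_prop) fun x => by simpa using hC (l * x)
  rw [dist_eq_norm, ← laplace_sub (h.mono hs) hmul]
  simp only [← mul_one_sub]
  exact (norm_laplace_le (h.mul_bdd (by fun_prop) fun x => hbound (l * x)) hs).trans_lt hl

lemma exists_schwartzMap_coe_eq {f : ℝ → ℝ} (hf : HasCompactSupport f) (hf' : ContDiff ℝ ∞ f) :
    ∃ φ : 𝓢(ℝ, ℂ), HasCompactSupport φ ∧ ∀ x, φ x = f x := by
  have hsupp : HasCompactSupport fun x => (f x : ℂ) := hf.comp_left Complex.ofReal_zero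
  exact ⟨hsupp.toSchwartzMap (Complex.ofRealCLM.contDiff.comp hf'), hsupp, fun _ => rfl⟩

lemma HasC0Deriv.exists_isTest_near (h : HasC0Deriv τ τ') (hs₀ : LaplaceIntegrable τ s₀) {ε : ℝ}
    (hε : 0 < ε) :
    ∃ σ σ', IsTest σ σ' ∧ (∀ x ≥ 0, ‖τ' x - σ' x‖ < ε) ∧
      ∀ s : ℂ, s₀.re ≤ s.re → ‖Laplace τ s - Laplace σ s‖ < ε := by
  let f : ContDiffBump (0 : ℝ) := ⟨1, 2, one_pos, one_lt_two⟩
  obtain ⟨χ, hχ, hχf⟩ := exists_schwartzMap_coe_eq f.hasCompactSupport f.contDiff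
  have hχ₀ : χ 0 = 1 := by simp [hχf, f.one_of_mem_closedBall, f]
  have hderiv := Metric.tendstoUniformlyOn_iff.1 (h.tendstoUniformlyOn_deriv_mul_schwartz hχ₀) ε hε
  have hlaplace := Metric.tendstoUniformlyOn_iff.1
    (hs₀.tendstoUniformlyOn_laplace_mul_schwartz hχ₀) ε hε
  obtain ⟨l, hl, hderiv, hlaplace⟩ := (eventually_mem_nhdsWithin.and
    (hderiv.and (nhdsWithin_le_nhds hlaplace))).exists
  have hzero : χ =ᶠ[atTop] 0 := by
    rw [hasCompactSupport_iff_eventuallyEq, coclosedCompact_eq_cocompact] at hχ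
    exact hχ.filter_mono atTop_le_cocompact
  refine ⟨_, _, ⟨h.mul_schwartz χ hl, ?_⟩, fun x hx => ?_, fun s hs => ?_⟩
  · filter_upwards [(tendsto_id.const_mul_atTop hl).eventually hzero] with x hx
    simpa using Or.inr hx
  · simpa only [dist_eq_norm] using hderiv x hx
  · simpa only [dist_eq_norm] using hlaplace s hs

end Cutoff

section FourierCutoff

variable {τ τ' w : ℝ → ℂ} {s : ℂ}

lemma LaplaceIntegrable.integrable_prod_mul_cexp (h : LaplaceIntegrable τ s) (hw : Integrable w)
    (l : ℝ) :
    Integrable (Function.uncurry fun x t : ℝ =>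
        τ x * Complex.exp (-(s * x)) * w t *
          Complex.exp ((-2 * Real.pi * t * l * x : ℝ) * Complex.I))
      ((volume.restrict (Ioi 0)).prod volume) :=
  (Integrable.mul_prod h hw).mul_bdd (c := 1) (Continuous.aestronglyMeasurable (by fun_prop))
    (Eventually.of_forall fun p => (Complex.norm_exp_ofReal_mul_I _).le)

lemma integral_mul_cexp_eq_mul_laplace (τ w : ℝ → ℂ) (s : ℂ) (l t : ℝ) :
    ∫ x in Ioi (0 : ℝ),
        τ x * Complex.exp (-(s * x)) * w t *
          Complex.exp ((-2 * Real.pi * t * l * x : ℝ) * Complex.I) =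
      w t * Laplace τ (s + (2 * Real.pi * t * l : ℝ) * Complex.I) := by
  rw [Laplace, ← integral_const_mul]
  refine integral_congr_ae (Eventually.of_forall fun x => ?_)
  simp only [mul_right_comm _ (w t), mul_comm (w t), mul_assoc, ← Complex.exp_add]
  push_cast
  ring_nf

lemma LaplaceIntegrable.laplace_mul_fourier (h : LaplaceIntegrable τ s) (hw : Integrable w)
    (l : ℝ) :
    Laplace (fun x => τ x * 𝓕 w (l * x)) s =
      ∫ t, w t * Laplace τ (s + (2 * Real.pi * t * l : ℝ) * Complex.I) := by
  simp_rw [← integral_mul_cexp_eq_mul_laplace]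
  rw [← integral_integral_swap (h.integrable_prod_mul_cexp hw l), Laplace]
  refine integral_congr_ae (Eventually.of_forall fun x => ?_)
  simp only [Real.fourier_real_eq_integral_exp_smul, smul_eq_mul, mul_right_comm (τ x)]
  rw [← integral_const_mul]
  refine integral_congr_ae (Eventually.of_forall fun t => ?_)
  push_cast
  ring_nf

lemma LaplaceIntegrable.integrable_mul_laplace_add_mul_I (h : LaplaceIntegrable τ s)
    (hw : Integrable w) (l : ℝ) :
    Integrable fun t => w t * Laplace τ (s + (2 * Real.pi * t * l : ℝ) * Complex.I) := by
  simp_rw [← integral_mul_cexp_eq_mul_laplace]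
  exact (h.integrable_prod_mul_cexp hw l).integral_prod_right

lemma tendstoUniformlyOn_laplace_mul_fourier (h : ∀ s : ℂ, 0 < s.re → LaplaceIntegrable τ s)
    {b r r₁ : ℝ} (hr : r < r₁)
    (huc : UniformContinuousOn (Laplace τ) (Ioc 0 b ×ℂ Icc (-r₁) r₁)) (hw : Integrable w)
    (hw₁ : ∫ t, w t = 1) (hsupp : HasCompactSupport w) :
    TendstoUniformlyOn (fun (l : ℝ) s => Laplace (fun x => τ x * 𝓕 w (l * x)) s) (Laplace τ)
      (𝓝 0) (Ioc 0 b ×ℂ Icc (-r) r) := by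
  refine Metric.tendstoUniformlyOn_iff.2 fun ε hε => ?_
  set B := ∫ t, ‖w t‖
  have : 0 ≤ B := integral_nonneg fun t => norm_nonneg (w t)
  obtain ⟨δ, hδ, hδε⟩ := Metric.uniformContinuousOn_iff.1 huc (ε / (B + 1)) (by positivity)
  have hshift : ∀ᶠ l : ℝ in 𝓝 0, ∀ t ∈ tsupport w, |2 * Real.pi * t * l| < min δ (r₁ - r) := by
    refine hsupp.isCompact.eventually_forall_of_forall_eventually fun t _ => ?_
    have hcont : Continuous fun p : ℝ × ℝ => |2 * Real.pi * p.2 * p.1| := by fun_prop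
    exact (hcont.tendsto (0, t)).eventually_lt_const (by simpa using ⟨hδ, hr⟩)
  filter_upwards [hshift] with l hl s hs
  have hLs := h s hs.1.1
  have hpoint (t : ℝ) :
      ‖w t * Laplace τ s - w t * Laplace τ (s + (2 * Real.pi * t * l : ℝ) * Complex.I)‖ ≤
        ‖w t‖ * (ε / (B + 1)) := by
    rw [← mul_sub, norm_mul]
    by_cases ht : t ∈ tsupport w
    · obtain ⟨hlδ, hlr⟩ := lt_min_iff.1 (hl t ht)
      gcongr
      rw [← dist_eq_norm]
      refine (hδε s ⟨hs.1, ?_⟩ _ ⟨by simpa using hs.1, ?_⟩ ?_).le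
      · exact Icc_subset_Icc (by linarith) hr.le hs.2
      · have him := abs_le.2 hs.2
        simpa using abs_le.1 ((abs_add_le s.im _).trans (by linarith))
      · simpa [dist_eq_norm, -Complex.ofReal_mul] using hlδ
    · simp [image_eq_zero_of_notMem_tsupport ht]
  have hconst : Laplace τ s = ∫ t, w t * Laplace τ s := by rw [integral_mul_const, hw₁, one_mul]
  rw [dist_eq_norm, hLs.laplace_mul_fourier hw, hconst,
    ← integral_sub (hw.mul_const _) (hLs.integrable_mul_laplace_add_mul_I hw l)]
  calc _ ≤ ∫ t, ‖w t‖ * (ε / (B + 1)) :=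
        norm_integral_le_of_norm_le (hw.norm.mul_const _) (Eventually.of_forall hpoint)
    _ = B * (ε / (B + 1)) := integral_mul_const _ _
    _ < ε := by
        rw [mul_div_assoc', div_lt_iff₀ (by positivity)]
        linarith

lemma HasC0Deriv.laplaceIntegrable_mul_schwartz (h : HasC0Deriv τ τ') (φ : 𝓢(ℝ, ℂ)) {l : ℝ}
    (hl : 0 < l) : LaplaceIntegrable (fun x => τ x * φ (l * x)) 0 := by
  have hcont : Continuous φ := φ.continuous
  obtain ⟨A, -, hA⟩ := h.exists_norm_le hl
  have hdom : Integrable fun x => A * (‖l * x‖ ^ 0 * ‖φ (l * x)‖) + ‖l * x‖ ^ 1 * ‖φ (l * x)‖ :=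
    (((φ.integrable_pow_mul volume 0).comp_mul_left' hl.ne').const_mul A).add
      ((φ.integrable_pow_mul volume 1).comp_mul_left' hl.ne')
  refine hdom.integrableOn.mono' ?_ (ae_restrict_of_forall_mem measurableSet_Ioi fun x hx => ?_)
  · exact (((h.continuousOn.mono Ioi_subset_Ici_self).mul (by fun_prop)).mul
      (by fun_prop)).aestronglyMeasurable measurableSet_Ioi
  · have hx₀ : (0 : ℝ) < x := hx
    calc ‖τ x * φ (l * x) * Complex.exp (-(0 * x))‖ = ‖τ x‖ * ‖φ (l * x)‖ := by simp
      _ ≤ (A + l * x) * ‖φ (l * x)‖ := by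
          gcongr
          exact hA x hx₀.le
      _ = A * (‖l * x‖ ^ 0 * ‖φ (l * x)‖) + ‖l * x‖ ^ 1 * ‖φ (l * x)‖ := by
          rw [Real.norm_of_nonneg (by positivity)]
          ring

lemma HasC0Deriv.exists_isTest_near_of_uniformContinuousOn (h : HasC0Deriv τ τ') {b r r₁ : ℝ}
    (hr : r < r₁) (huc : UniformContinuousOn (Laplace τ) (Ioc 0 b ×ℂ Icc (-r₁) r₁)) {ε : ℝ}
    (hε : 0 < ε) :
    ∃ σ σ', IsTest σ σ' ∧ (∀ x ≥ 0, ‖τ' x - σ' x‖ < ε) ∧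
      ∀ s ∈ Ioc 0 b ×ℂ Icc (-r) r, ‖Laplace τ s - Laplace σ s‖ < ε := by
  let f : ContDiffBump (0 : ℝ) := ⟨1, 2, one_pos, one_lt_two⟩
  obtain ⟨w, hw, hwf⟩ := exists_schwartzMap_coe_eq
    (f.hasCompactSupport_normed (μ := volume)) f.contDiff_normed
  have hw₁ : ∫ t, w t = 1 := by
    simp only [hwf, integral_complex_ofReal, f.integral_normed, Complex.ofReal_one]
  have hφ₀ : 𝓕 w 0 = 1 := by
    simp [SchwartzMap.fourier_coe, Real.fourier_real_eq_integral_exp_smul, hw₁]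
  have hderiv := Metric.tendstoUniformlyOn_iff.1 (h.tendstoUniformlyOn_deriv_mul_schwartz hφ₀)
    (ε / 2) (half_pos hε)
  have hlaplace := Metric.tendstoUniformlyOn_iff.1 (tendstoUniformlyOn_laplace_mul_fourier
    (fun s hs => h.laplaceIntegrable hs) hr huc w.integrable hw₁ hw) (ε / 2) (half_pos hε)
  obtain ⟨l, hl, hderiv, hlaplace⟩ := (eventually_mem_nhdsWithin.and
    (hderiv.and (nhdsWithin_le_nhds hlaplace))).exists
  obtain ⟨σ, σ', hσ, hσderiv, hσlaplace⟩ := (h.mul_schwartz (𝓕 w) hl).exists_isTest_near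
    (h.laplaceIntegrable_mul_schwartz (𝓕 w) hl) (half_pos hε)
  simp only [← dist_eq_norm] at hσderiv hσlaplace ⊢
  exact ⟨σ, σ', hσ,
    fun x hx => (dist_triangle _ _ _).trans_lt
      ((add_lt_add (hderiv x hx) (hσderiv x hx)).trans_eq (add_halves ε)),
    fun s hs => (dist_triangle _ _ _).trans_lt
      ((add_lt_add (hlaplace s hs) (hσlaplace s hs.1.1.le)).trans_eq (add_halves ε))⟩

end FourierCutoff

section Hairpin

open Complex
open scoped Interval

variable {E : Type*} [NormedAddCommGroup E] {f g : ℂ → E} {a b m ρ : ℝ}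

/-- The hairpin with horizontal arms at heights `±ρ` over the interval between `m` and `a`, joined
by a vertical segment over `a`: the boundary of a rectangle without its side over `m`. -/
def hairpin (ρ a m : ℝ) : Set ℂ :=
  [[a, m]] ×ℂ {-ρ, ρ} ∪ {a} ×ℂ [[-ρ, ρ]]

lemma bottom_mem_hairpin {x : ℝ} (hx : x ∈ [[a, m]]) : x + (-ρ : ℝ) * I ∈ hairpin ρ a m :=
  .inl <| by simpa [mem_reProdIm] using hx

lemma top_mem_hairpin {x : ℝ} (hx : x ∈ [[a, m]]) : x + ρ * I ∈ hairpin ρ a m :=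
  .inl <| by simpa [mem_reProdIm] using hx

lemma side_mem_hairpin {y : ℝ} (hy : y ∈ [[-ρ, ρ]]) : a + y * I ∈ hairpin ρ a m :=
  .inr <| by simpa [mem_reProdIm] using hy

lemma hairpin_subset (hm : m ∈ [[a, b]]) : hairpin ρ a m ⊆ [[a, b]] ×ℂ [[-ρ, ρ]] := by
  refine union_subset (reProdIm_subset_iff.2 <| prod_mono (uIcc_subset_uIcc_left hm) ?_)
    (reProdIm_subset_iff.2 <| prod_mono (singleton_subset_iff.2 left_mem_uIcc) subset_rfl)
  exact insert_subset left_mem_uIcc (singleton_subset_iff.2 right_mem_uIcc)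

lemma le_norm_sub_of_mem_hairpin {s z : ℂ} {d : ℝ} (hz : z ∈ hairpin ρ a m)
    (hre : d ≤ |a - s.re|) (him : d ≤ ρ - |s.im|) : d ≤ ‖z - s‖ := by
  rcases hz with ⟨-, hz⟩ | ⟨hz, -⟩
  · have hρ : ρ ≤ |z.im| := by
      rcases hz with hz | hz <;> rw [hz]
      exacts [(le_abs_self ρ).trans_eq (abs_neg ρ).symm, le_abs_self ρ]
    refine le_trans ?_ (abs_im_le_norm _)
    rw [sub_im]
    linarith [abs_sub_abs_le_abs_sub z.im s.im]
  · refine hre.trans ((abs_re_le_norm _).trans_eq' ?_)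
    rw [sub_re, show z.re = a from hz]

section ContinuousOn

variable (hf : ContinuousOn f (hairpin ρ a m))
include hf

lemma intervalIntegrable_hairpin_bottom :
    IntervalIntegrable (fun x : ℝ => f (x + (-ρ : ℝ) * I)) volume a m :=
  (hf.comp (by fun_prop) fun _ => bottom_mem_hairpin).intervalIntegrable

lemma intervalIntegrable_hairpin_top :
    IntervalIntegrable (fun x : ℝ => f (x + ρ * I)) volume a m :=
  (hf.comp (by fun_prop) fun _ => top_mem_hairpin).intervalIntegrable

lemma intervalIntegrable_hairpin_side :
    IntervalIntegrable (fun y : ℝ => f (a + y * I)) volume (-ρ) ρ :=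
  (hf.comp (by fun_prop) fun _ => side_mem_hairpin).intervalIntegrable

end ContinuousOn

variable [NormedSpace ℂ E]

/-- The contour integral of `f` along `hairpin ρ a m`, from `m + iρ` via `a + iρ` and `a - iρ`
to `m - iρ`. -/
noncomputable def hairpinIntegral (f : ℂ → E) (ρ a m : ℝ) : E :=
  (∫ x in a..m, f (x + (-ρ : ℝ) * I)) - (∫ x in a..m, f (x + ρ * I)) -
    I • ∫ y in (-ρ)..ρ, f (a + y * I)

lemma hairpinIntegral_congr (h : EqOn f g (hairpin ρ a m)) :
    hairpinIntegral f ρ a m = hairpinIntegral g ρ a m := by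
  refine congrArg₂ _ (congrArg₂ _ ?_ ?_) (congrArg _ ?_)
  · exact intervalIntegral.integral_congr fun x hx => h (bottom_mem_hairpin hx)
  · exact intervalIntegral.integral_congr fun x hx => h (top_mem_hairpin hx)
  · exact intervalIntegral.integral_congr fun y hy => h (side_mem_hairpin hy)

lemma hairpinIntegral_add (hf : ContinuousOn f (hairpin ρ a m))
    (hg : ContinuousOn g (hairpin ρ a m)) :
    hairpinIntegral (fun z => f z + g z) ρ a m =
      hairpinIntegral f ρ a m + hairpinIntegral g ρ a m := by
  unfold hairpinIntegral
  rw [intervalIntegral.integral_add (intervalIntegrable_hairpin_bottom hf)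
      (intervalIntegrable_hairpin_bottom hg),
    intervalIntegral.integral_add (intervalIntegrable_hairpin_top hf)
      (intervalIntegrable_hairpin_top hg),
    intervalIntegral.integral_add (intervalIntegrable_hairpin_side hf)
      (intervalIntegrable_hairpin_side hg), smul_add]
  abel

lemma hairpinIntegral_smul_const [CompleteSpace E] (f : ℂ → ℂ) (c : E) :
    hairpinIntegral (fun z => f z • c) ρ a m = hairpinIntegral f ρ a m • c := by
  simp only [hairpinIntegral, intervalIntegral.integral_smul_const, sub_smul, smul_assoc]

lemma hairpinIntegral_clm_comp [CompleteSpace E] {F : Type*} [NormedAddCommGroup F]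
    [NormedSpace ℂ F] [CompleteSpace F] (L : E →L[ℂ] F) (hf : ContinuousOn f (hairpin ρ a m)) :
    hairpinIntegral (fun z => L (f z)) ρ a m = L (hairpinIntegral f ρ a m) := by
  simp only [hairpinIntegral, map_sub, map_smul,
    L.intervalIntegral_comp_comm (intervalIntegrable_hairpin_bottom hf),
    L.intervalIntegral_comp_comm (intervalIntegrable_hairpin_top hf),
    L.intervalIntegral_comp_comm (intervalIntegrable_hairpin_side hf)]

lemma hairpinIntegral_mem [CompleteSpace E] {S : Submodule ℂ E} (hS : IsClosed (S : Set E))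
    (hf : ContinuousOn f (hairpin ρ a m)) (hfS : ∀ z ∈ hairpin ρ a m, f z ∈ S) :
    hairpinIntegral f ρ a m ∈ S := by
  have hzero : EqOn (fun z => S.mkQL (f z)) (fun _ => 0) (hairpin ρ a m) := fun z hz =>
    (Submodule.Quotient.mk_eq_zero S).2 (hfS z hz)
  rw [← Submodule.Quotient.mk_eq_zero]
  calc S.mkQL (hairpinIntegral f ρ a m)
      = hairpinIntegral (fun z => S.mkQL (f z)) ρ a m := (hairpinIntegral_clm_comp _ hf).symm
    _ = 0 := by rw [hairpinIntegral_congr hzero]; simp [hairpinIntegral]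

lemma norm_hairpinIntegral_le {M : ℝ} (h : ∀ z ∈ hairpin ρ a m, ‖f z‖ ≤ M) :
    ‖hairpinIntegral f ρ a m‖ ≤ M * (2 * |m - a| + 2 * |ρ|) := by
  have hbottom := intervalIntegral.norm_integral_le_of_norm_le_const fun x hx =>
    h _ (bottom_mem_hairpin (uIoc_subset_uIcc hx))
  have htop := intervalIntegral.norm_integral_le_of_norm_le_const fun x hx =>
    h _ (top_mem_hairpin (uIoc_subset_uIcc hx))
  have hside := intervalIntegral.norm_integral_le_of_norm_le_const fun y hy =>
    h _ (side_mem_hairpin (uIoc_subset_uIcc hy))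
  rw [sub_neg_eq_add, ← two_mul, abs_mul, abs_two] at hside
  have htri := (norm_sub_le _ _).trans (add_le_add_left (norm_sub_le
    (∫ x in a..m, f (x + (-ρ : ℝ) * I)) (∫ x in a..m, f (x + ρ * I)))
    ‖I • ∫ y in (-ρ)..ρ, f (a + y * I)‖)
  rw [norm_smul, norm_I, one_mul] at htri
  exact htri.trans (by linarith)

lemma hairpinIntegral_eq_sub_of_hasDerivAt [CompleteSpace E] {G : ℂ → E}
    (hG : ∀ z ∈ hairpin ρ a m, HasDerivAt G (f z) z) (hf : ContinuousOn f (hairpin ρ a m)) :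
    hairpinIntegral f ρ a m = G (m + (-ρ : ℝ) * I) - G (m + ρ * I) := by
  have harm (y x : ℝ) : HasDerivAt (fun x : ℝ => x + y * I) 1 x :=
    (hasDerivAt_id x).ofReal_comp.add_const _
  have hvert (y : ℝ) : HasDerivAt (fun y : ℝ => a + y * I) I y := by
    simpa using ((hasDerivAt_id y).ofReal_comp.mul_const I).const_add (a : ℂ)
  have hbottom := intervalIntegral.integral_eq_sub_of_hasDerivAt (fun x hx => by
    simpa only [one_smul] using (hG _ (bottom_mem_hairpin hx)).scomp x (harm (-ρ) x))
    (intervalIntegrable_hairpin_bottom hf)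
  have htop := intervalIntegral.integral_eq_sub_of_hasDerivAt (fun x hx => by
    simpa only [one_smul] using (hG _ (top_mem_hairpin hx)).scomp x (harm ρ x))
    (intervalIntegrable_hairpin_top hf)
  have hside := intervalIntegral.integral_eq_sub_of_hasDerivAt
    (fun y hy => (hG _ (side_mem_hairpin hy)).scomp y (hvert y))
    ((intervalIntegrable_hairpin_side hf).smul I)
  rw [intervalIntegral.integral_smul] at hside
  rw [hairpinIntegral, hbottom, htop, hside]
  simp only [Function.comp_apply]
  abel

lemma hairpinIntegral_sub_hairpinIntegral (hfa : ContinuousOn f (hairpin ρ a m))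
    (hfb : ContinuousOn f (hairpin ρ b m)) :
    hairpinIntegral f ρ a m - hairpinIntegral f ρ b m =
      (∫ x in a..b, f (x + (-ρ : ℝ) * I)) - (∫ x in a..b, f (x + ρ * I)) +
        I • (∫ y in (-ρ)..ρ, f (b + y * I)) - I • ∫ y in (-ρ)..ρ, f (a + y * I) := by
  rw [← intervalIntegral.integral_add_adjacent_intervals (intervalIntegrable_hairpin_bottom hfa)
      (intervalIntegrable_hairpin_bottom hfb).symm,
    ← intervalIntegral.integral_add_adjacent_intervals (intervalIntegrable_hairpin_top hfa)
      (intervalIntegrable_hairpin_top hfb).symm]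
  simp only [hairpinIntegral, intervalIntegral.integral_symm b m]
  abel

lemma hairpinIntegral_eq_of_differentiableOn
    (hf : DifferentiableOn ℂ f ([[a, b]] ×ℂ [[-ρ, ρ]])) (hm : m ∈ [[a, b]]) :
    hairpinIntegral f ρ a m = hairpinIntegral f ρ b m := by
  have hfa := hf.continuousOn.mono (hairpin_subset hm)
  have hfb := hf.continuousOn.mono (uIcc_comm a b ▸ hairpin_subset (uIcc_comm a b ▸ hm))
  rw [← sub_eq_zero, hairpinIntegral_sub_hairpinIntegral hfa hfb]
  exact integral_boundary_rect_eq_zero_of_differentiableOn f ⟨a, -ρ⟩ ⟨b, ρ⟩ hf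

lemma continuousOn_inv_sub_hairpin {s : ℂ} (hs : s ∉ hairpin ρ a m) :
    ContinuousOn (fun z => (z - s)⁻¹) (hairpin ρ a m) :=
  (continuousOn_id.sub continuousOn_const).inv₀ fun _ hz =>
    sub_ne_zero.2 (ne_of_mem_of_not_mem hz hs)

lemma notMem_hairpin {s : ℂ} (hre : s.re ≠ a) (him : |s.im| < ρ) : s ∉ hairpin ρ a m := fun hs => by
  have := le_norm_sub_of_mem_hairpin (d := min |a - s.re| (ρ - |s.im|)) hs (min_le_left _ _)
    (min_le_right _ _)
  rw [sub_self, norm_zero, min_le_iff, abs_nonpos_iff, sub_eq_zero] at this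
  exact this.elim (fun h => hre h.symm) fun h => by linarith

/-- The factor `ζ` turns the branch cut of the logarithm away from the hairpin. -/
lemma hairpinIntegral_inv_sub {s ζ : ℂ} (hs : ∀ z ∈ hairpin ρ a m, ζ * (z - s) ∈ slitPlane) :
    hairpinIntegral (fun z => (z - s)⁻¹) ρ a m =
      log (ζ * (m + (-ρ : ℝ) * I - s)) - log (ζ * (m + ρ * I - s)) := by
  have hne (z : ℂ) (hz : z ∈ hairpin ρ a m) : ζ ≠ 0 ∧ z - s ≠ 0 :=
    mul_ne_zero_iff.1 (slitPlane_ne_zero (hs z hz))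
  refine hairpinIntegral_eq_sub_of_hasDerivAt (G := fun z => log (ζ * (z - s))) (fun z hz => ?_)
    ((continuousOn_id.sub continuousOn_const).inv₀ fun z hz => (hne z hz).2)
  have h := (((hasDerivAt_id z).sub_const s).const_mul ζ).clog (hs z hz)
  rwa [mul_div_mul_left _ _ (hne z hz).1, one_div] at h

lemma hairpinIntegral_inv_sub_sub {s : ℂ} (ha : a < s.re) (hb : s.re < b) (hs : |s.im| < ρ) :
    hairpinIntegral (fun z => (z - s)⁻¹) ρ a m - hairpinIntegral (fun z => (z - s)⁻¹) ρ b m =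
      2 * Real.pi * I := by
  have him := abs_lt.1 hs
  have harm (z : ℂ) (hz : z.im ∈ ({-ρ, ρ} : Set ℝ)) : (z - s).im ≠ 0 := by
    rw [sub_im, sub_ne_zero]
    rcases hz with hz | hz <;> rw [hz]
    exacts [him.1.ne, him.2.ne']
  have hleft : ∀ z ∈ hairpin ρ a m, -1 * (z - s) ∈ slitPlane := by
    rintro z (⟨-, hz⟩ | ⟨hz, -⟩)
    · exact .inr (by simpa [sub_eq_zero, eq_comm] using harm z hz)
    · exact .inl (by simpa [show z.re = a from hz] using ha)
  have hright : ∀ z ∈ hairpin ρ b m, 1 * (z - s) ∈ slitPlane := by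
    rintro z (⟨-, hz⟩ | ⟨hz, -⟩)
    · exact .inr (by simpa using harm z hz)
    · exact .inl (by simpa [show z.re = b from hz] using hb)
  rw [hairpinIntegral_inv_sub hleft, hairpinIntegral_inv_sub hright]
  simp only [neg_one_mul, one_mul, log, norm_neg]
  rw [arg_neg_eq_arg_add_pi_of_im_neg (by simpa using him.1),
    arg_neg_eq_arg_sub_pi_of_im_pos (by simpa using him.2)]
  push_cast
  ring

/-- **Cauchy's integral formula** for a rectangle, with the boundary split into two hairpins. -/
lemma hairpinIntegral_inv_sub_smul_sub [CompleteSpace E] {s : ℂ} (ha : a < s.re) (hb : s.re < b)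
    (hs : |s.im| < ρ) (hm : m ∈ [[a, b]])
    (hf : DifferentiableOn ℂ f ([[a, b]] ×ℂ [[-ρ, ρ]])) :
    hairpinIntegral (fun z => (z - s)⁻¹ • f z) ρ a m -
      hairpinIntegral (fun z => (z - s)⁻¹ • f z) ρ b m = (2 * Real.pi * I : ℂ) • f s := by
  have hρ : -ρ ≤ ρ := by linarith [abs_nonneg s.im]
  have hnhds : [[a, b]] ×ℂ [[-ρ, ρ]] ∈ 𝓝 s := by
    rw [uIcc_of_le (ha.trans hb).le, uIcc_of_le hρ]
    refine mem_of_superset ((isOpen_Ioo.reProdIm isOpen_Ioo).mem_nhds ⟨⟨ha, hb⟩, abs_lt.1 hs⟩)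
      (inter_subset_inter (preimage_mono Ioo_subset_Icc_self) (preimage_mono Ioo_subset_Icc_self))
  have hdslope := (differentiableOn_dslope hnhds).2 hf
  have hsplit {c : ℝ} (hc : s.re ≠ c)
      (hsub : hairpin ρ c m ⊆ [[a, b]] ×ℂ [[-ρ, ρ]]) :
      hairpinIntegral (fun z => (z - s)⁻¹ • f z) ρ c m =
        hairpinIntegral (dslope f s) ρ c m +
          hairpinIntegral (fun z => (z - s)⁻¹) ρ c m • f s := by
    have hnot : s ∉ hairpin ρ c m := notMem_hairpin hc hs
    rw [← hairpinIntegral_smul_const, ← hairpinIntegral_add (g := fun z => (z - s)⁻¹ • f s)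
      (hdslope.continuousOn.mono hsub)
      ((continuousOn_inv_sub_hairpin hnot).smul continuousOn_const)]
    refine hairpinIntegral_congr fun z hz => ?_
    simp only [dslope_of_ne f (ne_of_mem_of_not_mem hz hnot), slope_def_module, ← smul_add,
      sub_add_cancel]
  rw [hsplit ha.ne' (hairpin_subset hm),
    hsplit hb.ne (uIcc_comm a b ▸ hairpin_subset (uIcc_comm a b ▸ hm)),
    hairpinIntegral_eq_of_differentiableOn hdslope hm, add_sub_add_left_eq_sub, ← sub_smul,
    hairpinIntegral_inv_sub_sub ha hb hs]

end Hairpin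

section BanachValued

open Complex Metric

variable {X E F : Type*} [TopologicalSpace X] [NormedAddCommGroup E] [NormedSpace ℂ E]
  [NormedAddCommGroup F] [NormedSpace ℂ F] {U : Set ℂ} {z₀ : ℂ} {R : ℝ}

lemma circleIntegral_clm_comp [CompleteSpace E] [CompleteSpace F] (L : E →L[ℂ] F) {f : ℂ → E}
    (hf : CircleIntegrable f z₀ R) :
    ∮ z in C(z₀, R), L (f z) = L (∮ z in C(z₀, R), f z) := by
  simp only [circleIntegral, ← map_smul]
  exact L.intervalIntegral_comp_comm hf.out

lemma dist_apply_le_of_differentiableOn_ball {f : ℂ → F} {C : ℝ}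
    (hf : DifferentiableOn ℂ f (ball z₀ R)) (hC : ∀ z ∈ ball z₀ R, ‖f z‖ ≤ C) {z : ℂ}
    (hz : z ∈ ball z₀ R) : dist (f z) (f z₀) ≤ (C + C) / R * dist z z₀ := by
  refine dist_le_div_mul_dist_of_mapsTo_ball hf (fun w hw => ?_) hz
  rw [mem_closedBall, dist_eq_norm]
  exact (norm_sub_le _ _).trans
    (add_le_add (hC w hw) (hC z₀ (mem_ball_self (pos_of_mem_ball hz))))

variable {f : ℂ → X →ᵇ F}

lemma continuousOn_of_differentiableOn_apply (hU : IsOpen U)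
    (hf : ∀ x, DifferentiableOn ℂ (fun z => f z x) U)
    (hbdd : ∀ z₀ ∈ U, ∃ C, ∀ᶠ z in 𝓝 z₀, ‖f z‖ ≤ C) : ContinuousOn f U := by
  intro z₀ hz₀
  obtain ⟨C, hC⟩ := hbdd z₀ hz₀
  obtain ⟨R, hR, hball⟩ := eventually_nhds_iff_ball.1 (hC.and (hU.eventually_mem hz₀))
  have hC₀ : 0 ≤ C := (norm_nonneg _).trans (hball z₀ (mem_ball_self hR)).1
  have hdist : ∀ᶠ z in 𝓝 z₀, dist (f z) (f z₀) ≤ (C + C) / R * dist z z₀ := by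
    filter_upwards [ball_mem_nhds z₀ hR] with z hz
    refine (BoundedContinuousFunction.dist_le (by positivity)).2 fun x => ?_
    exact dist_apply_le_of_differentiableOn_ball ((hf x).mono fun w hw => (hball w hw).2)
      (fun w hw => ((f w).norm_coe_le_norm x).trans (hball w hw).1) hz
  refine (tendsto_iff_dist_tendsto_zero.2 (squeeze_zero' (.of_forall fun _ => dist_nonneg) hdist
    ?_)).mono_left nhdsWithin_le_nhds
  have hcont : Continuous fun z => (C + C) / R * dist z z₀ := by fun_prop
  simpa using hcont.tendsto z₀

/-- Continuity comes from the Schwarz lemma, applied uniformly in `x`; then `f` is its own Cauchy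
integral, as one checks by evaluating at each `x`. -/
lemma differentiableOn_of_differentiableOn_apply [CompleteSpace F] (hU : IsOpen U)
    (hf : ∀ x, DifferentiableOn ℂ (fun z => f z x) U)
    (hbdd : ∀ z₀ ∈ U, ∃ C, ∀ᶠ z in 𝓝 z₀, ‖f z‖ ≤ C) : DifferentiableOn ℂ f U := by
  have hcont := continuousOn_of_differentiableOn_apply hU hf hbdd
  intro z₀ hz₀
  obtain ⟨R, hR, hRU⟩ := nhds_basis_closedBall.mem_iff.1 (hU.mem_nhds hz₀)
  lift R to NNReal using hR.le
  have hsphere : ContinuousOn f (sphere z₀ R) := hcont.mono (sphere_subset_closedBall.trans hRU)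
  have hcauchy := (hasFPowerSeriesOn_cauchy_integral (hsphere.circleIntegrable hR.le)
    (NNReal.coe_pos.1 hR)).differentiableOn.differentiableAt (eball_mem_nhds z₀ (by simpa using hR))
  refine (hcauchy.congr_of_eventuallyEq ?_).differentiableWithinAt
  filter_upwards [ball_mem_nhds z₀ hR] with w hw
  ext x
  have hintegrand : CircleIntegrable (fun z => (z - w)⁻¹ • f z) z₀ R := by
    refine (((continuousOn_id.sub continuousOn_const).inv₀ fun z hz => ?_).smul
      hsphere).circleIntegrable hR.le
    exact sub_ne_zero.2 (ne_of_mem_of_not_mem hz fun hws => (mem_ball.1 hw).ne (mem_sphere.1 hws))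
  have heval := circleIntegral_clm_comp (BoundedContinuousFunction.evalCLM ℂ x) hintegrand
  have hcauchyx := ((hf x).mono hRU).circleIntegral_sub_inv_smul hw
  simp only [map_smul, BoundedContinuousFunction.evalCLM_apply] at heval
  rw [BoundedContinuousFunction.smul_apply, ← heval, hcauchyx, inv_smul_smul₀ two_pi_I_ne_zero]

lemma mem_of_eventually_mem_of_differentiableOn [CompleteSpace E] {S : Submodule ℂ E}
    (hS : IsClosed (S : Set E)) {g : ℂ → E} (hg : DifferentiableOn ℂ g U) (hU : IsOpen U)
    (hUc : IsPreconnected U) (hz₀ : z₀ ∈ U) (hmem : ∀ᶠ z in 𝓝 z₀, g z ∈ S) {z : ℂ} (hz : z ∈ U) :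
    g z ∈ S := by
  have hquot : DifferentiableOn ℂ (fun z => S.mkQL (g z)) U :=
    S.mkQL.differentiable.comp_differentiableOn hg
  exact (Submodule.Quotient.mk_eq_zero S).1
    ((hquot.analyticOnNhd hU).eqOn_zero_of_preconnected_of_eventuallyEq_zero hUc hz₀
      (hmem.mono fun w hw => (Submodule.Quotient.mk_eq_zero S).2 hw) hz)

end BanachValued

section PairSpace

variable {K : Set ℂ}

/-- Pairs of bounded continuous functions on `[0,∞)` and on `K`, realised as bounded continuous
functions on the disjoint union. The norm of `V_{α,r}` is equivalent to the norm induced by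
`τ ↦ (τ', F)` for `K = R̄_{α,r}`. -/
abbrev PairSpace (K : Set ℂ) : Type := (Ici (0 : ℝ) ⊕ K) →ᵇ ℂ

/-- `p` is the element `(f|_{[0,∞)}, g|_K)` of the space of pairs. -/
structure Represents (p : PairSpace K) (f : ℝ → ℂ) (g : ℂ → ℂ) : Prop where
  apply_inl : ∀ x : Ici (0 : ℝ), p (.inl x) = f x
  apply_inr : ∀ s : K, p (.inr s) = g s

variable {p q : PairSpace K} {f f' τ τ' : ℝ → ℂ} {g g' : ℂ → ℂ}

lemma HasC0Deriv.exists_norm_deriv_le (h : HasC0Deriv τ τ') : ∃ C, ∀ x ≥ 0, ‖τ' x‖ ≤ C := by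
  obtain ⟨X, hX⟩ := eventually_atTop.1 (h.tendsto_deriv.norm.eventually_lt_const
    (show ‖(0 : ℂ)‖ < 1 by simp))
  obtain ⟨C, hC⟩ := (isCompact_Icc (a := (0 : ℝ)) (b := X)).exists_bound_of_continuousOn
    (h.continuousOn_deriv.mono Icc_subset_Ici_self)
  refine ⟨max C 1, fun x hx => ?_⟩
  rcases le_total x X with hxX | hxX
  · exact (hC x ⟨hx, hxX⟩).trans (le_max_left _ _)
  · exact (hX x hxX).le.trans (le_max_right _ _)

lemma HasC0Deriv.exists_represents (h : HasC0Deriv τ τ') (hK : IsCompact K)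
    (hg : ContinuousOn g K) : ∃ p : PairSpace K, Represents p τ' g := by
  obtain ⟨C, hC⟩ := h.exists_norm_deriv_le
  obtain ⟨C', hC'⟩ := hK.exists_bound_of_continuousOn hg
  refine ⟨.ofNormedAddCommGroup (Sum.elim (fun x => τ' x) (fun s => g s))
    (h.continuousOn_deriv.domRestrict.sumElim hg.domRestrict) (max C C') ?_,
    ⟨fun _ => rfl, fun _ => rfl⟩⟩
  rintro (x | s)
  · exact (hC x x.2).trans (le_max_left _ _)
  · exact (hC' s s.2).trans (le_max_right _ _)

lemma Represents.norm_le (hp : Represents p f g) {C : ℝ} (hC : 0 ≤ C)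
    (hf : ∀ x ≥ 0, ‖f x‖ ≤ C) (hg : ∀ s ∈ K, ‖g s‖ ≤ C) : ‖p‖ ≤ C := by
  refine (BoundedContinuousFunction.norm_le hC).2 ?_
  rintro (x | s)
  · exact hp.apply_inl x ▸ hf x x.2
  · exact hp.apply_inr s ▸ hg s s.2

lemma Represents.sub (hp : Represents p f g) (hq : Represents q f' g') :
    Represents (p - q) (fun x => f x - f' x) (fun s => g s - g' s) :=
  ⟨fun x => by simp [hp.apply_inl, hq.apply_inl], fun s => by simp [hp.apply_inr, hq.apply_inr]⟩

/-- The pairs `(σ', L{σ; ·})` given by test functions `σ`. -/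
noncomputable def testSubmodule (K : Set ℂ) : Submodule ℂ (PairSpace K) where
  carrier := {p | ∃ σ σ', IsTest σ σ' ∧ Represents p σ' (Laplace σ)}
  zero_mem' := ⟨0, 0, .zero, fun _ => rfl, fun s => by simp [Laplace]⟩
  add_mem' := by
    rintro p q ⟨σ, σ', hσ, hp⟩ ⟨τ, τ', hτ, hq⟩
    refine ⟨_, _, hσ.add hτ, fun x => ?_, fun s => ?_⟩
    · simp [hp.apply_inl, hq.apply_inl]
    · rw [laplace_add (hσ.laplaceIntegrable s) (hτ.laplaceIntegrable s)]
      simp [hp.apply_inr, hq.apply_inr]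
  smul_mem' := by
    rintro c p ⟨σ, σ', hσ, hp⟩
    refine ⟨_, _, hσ.const_mul c, fun x => ?_, fun s => ?_⟩
    · simp [hp.apply_inl]
    · simp [hp.apply_inr, laplace_const_mul]

/-- `(f, g)` lies in the closure of the pairs `(σ', L{σ; ·})` of test functions, for the uniform
norms on `[0,∞)` and on `K`. -/
def IsTestLimit (K : Set ℂ) (f : ℝ → ℂ) (g : ℂ → ℂ) : Prop :=
  ∀ ε > 0, ∃ σ σ', IsTest σ σ' ∧ (∀ x ≥ 0, ‖f x - σ' x‖ < ε) ∧ ∀ s ∈ K, ‖g s - Laplace σ s‖ < ε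

lemma Represents.mem_topologicalClosure_testSubmodule_iff (hp : Represents p f g)
    (hK : IsCompact K) : p ∈ (testSubmodule K).topologicalClosure ↔ IsTestLimit K f g := by
  rw [← SetLike.mem_coe, Submodule.topologicalClosure_coe, Metric.mem_closure_iff]
  refine ⟨fun h ε hε => ?_, fun h ε hε => ?_⟩
  · obtain ⟨q, ⟨σ, σ', hσ, hq⟩, hpq⟩ := h ε hε
    rw [dist_eq_norm] at hpq
    refine ⟨σ, σ', hσ, fun x hx => ?_, fun s hs => ?_⟩
    · exact (hp.sub hq).apply_inl ⟨x, hx⟩ ▸ ((p - q).norm_coe_le_norm _).trans_lt hpq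
    · exact (hp.sub hq).apply_inr ⟨s, hs⟩ ▸ ((p - q).norm_coe_le_norm _).trans_lt hpq
  · obtain ⟨σ, σ', hσ, hfσ, hgσ⟩ := h (ε / 2) (half_pos hε)
    obtain ⟨q, hq⟩ := hσ.toHasC0Deriv.exists_represents hK
      hσ.differentiable_laplace.continuous.continuousOn
    refine ⟨q, ⟨σ, σ', hσ, hq⟩, ?_⟩
    rw [dist_eq_norm]
    exact ((hp.sub hq).norm_le (half_pos hε).le (fun x hx => (hfσ x hx).le)
      fun s hs => (hgσ s hs).le).trans_lt (half_lt_self hε)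

lemma IsTestLimit.isTest_add {σ σ' : ℝ → ℂ} (h : IsTestLimit K f g) (hσ : IsTest σ σ') :
    IsTestLimit K (fun x => σ' x + f x) (fun s => Laplace σ s + g s) := by
  intro ε hε
  obtain ⟨τ, τ', hτ, hf, hg⟩ := h ε hε
  refine ⟨_, _, hσ.add hτ, fun x hx => ?_, fun s hs => ?_⟩
  · simpa using hf x hx
  · simpa [laplace_add (hσ.laplaceIntegrable s) (hτ.laplaceIntegrable s)] using hg s hs

lemma IsTestLimit.of_forall_exists_near (h : ∀ ε > 0, ∃ f' g', IsTestLimit K f' g' ∧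
    (∀ x ≥ 0, ‖f x - f' x‖ < ε) ∧ ∀ s ∈ K, ‖g s - g' s‖ < ε) : IsTestLimit K f g := by
  intro ε hε
  obtain ⟨f', g', hlim, hf, hg⟩ := h (ε / 2) (half_pos hε)
  obtain ⟨σ, σ', hσ, hf', hg'⟩ := hlim (ε / 2) (half_pos hε)
  refine ⟨σ, σ', hσ, fun x hx => ?_, fun s hs => ?_⟩
  · linarith [norm_sub_le_norm_sub_add_norm_sub (f x) (f' x) (σ' x), hf x hx, hf' x hx]
  · linarith [norm_sub_le_norm_sub_add_norm_sub (g s) (g' s) (Laplace σ s), hg s hs, hg' s hs]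

end PairSpace

section Exponentials

variable {K : Set ℂ} {z s : ℂ}

lemma tendsto_cexp_mul_ofReal_atTop (hz : z.re < 0) :
    Tendsto (fun x : ℝ => Complex.exp (z * x)) atTop (𝓝 0) := by
  refine tendsto_zero_iff_norm_tendsto_zero.2 ?_
  simpa [Complex.norm_exp, Function.comp_def] using
    Real.tendsto_exp_atBot.comp (tendsto_id.const_mul_atTop_of_neg hz)

lemma hasC0Deriv_cexp_mul (hz : z.re < 0) :
    HasC0Deriv (fun x => Complex.exp (z * x)) (fun x => z * Complex.exp (z * x)) where
  hasDerivWithinAt x _ := by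
    simpa [mul_comm] using
      (((hasDerivAt_id x).ofReal_comp.const_mul z).cexp).hasDerivWithinAt (s := Ici 0)
  continuousOn_deriv := by fun_prop
  tendsto_deriv := by simpa using (tendsto_cexp_mul_ofReal_atTop hz).const_mul z

lemma cexp_mul_laplaceKernel (z s : ℂ) (x : ℝ) :
    Complex.exp (z * x) * Complex.exp (-(s * x)) = Complex.exp ((z - s) * x) := by
  rw [← Complex.exp_add]
  ring_nf

lemma laplaceIntegrable_cexp_mul (h : z.re < s.re) :
    LaplaceIntegrable (fun x => Complex.exp (z * x)) s := by
  simpa only [LaplaceIntegrable, cexp_mul_laplaceKernel] using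
    integrableOn_exp_mul_complex_Ioi (a := z - s) (by simpa using h) 0

lemma laplace_cexp_mul (h : z.re < s.re) :
    Laplace (fun x => Complex.exp (z * x)) s = (s - z)⁻¹ := by
  simp only [Laplace, cexp_mul_laplaceKernel]
  rw [integral_exp_mul_complex_Ioi (a := z - s) (by simpa using h) 0, Complex.ofReal_zero,
    mul_zero, Complex.exp_zero, neg_div, ← div_neg, neg_sub, one_div]

/-- `p` is the pair `(σ', L{σ; ·})` of the exponential `σ x = e^{zx}`, its Laplace transform being
continued past the half-plane `Re s > Re z`. -/
abbrev IsExpPair (p : PairSpace K) (z : ℂ) : Prop :=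
  Represents p (fun x => z * Complex.exp (z * x)) (fun s => (s - z)⁻¹)

lemma exists_isExpPair (hK : IsCompact K) (hz : z.re < 0) (hzK : z ∉ K) :
    ∃ p : PairSpace K, IsExpPair p z :=
  (hasC0Deriv_cexp_mul hz).exists_represents hK <|
    (continuousOn_id.sub continuousOn_const).inv₀ fun _ hs =>
      sub_ne_zero.2 (ne_of_mem_of_not_mem hs hzK)

lemma IsExpPair.mem_topologicalClosure_testSubmodule {p : PairSpace K} {β : ℝ}
    (hp : IsExpPair p z) (hK : IsCompact K) (hKβ : ∀ s ∈ K, β ≤ s.re) (hβ : β ≤ 0)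
    (hz : z.re < β) : p ∈ (testSubmodule K).topologicalClosure := by
  refine (hp.mem_topologicalClosure_testSubmodule_iff hK).2 fun ε hε => ?_
  obtain ⟨σ, σ', hσ, hder, hlap⟩ := (hasC0Deriv_cexp_mul (hz.trans_le hβ)).exists_isTest_near
    (laplaceIntegrable_cexp_mul (s := (β : ℂ)) hz) hε
  refine ⟨σ, σ', hσ, hder, fun s hs => ?_⟩
  simpa only [laplace_cexp_mul (hz.trans_le (hKβ s hs))] using hlap s (hKβ s hs)

lemma IsExpPair.norm_le {p : PairSpace K} {d : ℝ} (hp : IsExpPair p z) (hz : z.re ≤ 0)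
    (hd : 0 < d) (hzK : ∀ s ∈ K, d ≤ ‖s - z‖) : ‖p‖ ≤ max ‖z‖ d⁻¹ := by
  refine Represents.norm_le hp (by positivity) (fun x hx => ?_) fun s hs => ?_
  · refine le_max_of_le_left ?_
    rw [norm_mul]
    refine mul_le_of_le_one_right (norm_nonneg z) ?_
    rw [Complex.norm_exp, Complex.re_mul_ofReal, Real.exp_le_one_iff]
    exact mul_nonpos_of_nonpos_of_nonneg hz hx
  · rw [norm_inv]
    exact le_max_of_le_right (inv_anti₀ hd (hzK s hs))

variable {U : Set ℂ} {e : ℂ → PairSpace K}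

lemma differentiableOn_of_isExpPair (hU : IsOpen U) (hU₀ : ∀ z ∈ U, z.re ≤ 0) (hUK : Disjoint U K)
    (he : ∀ z ∈ U, IsExpPair (e z) z) : DifferentiableOn ℂ e U := by
  refine differentiableOn_of_differentiableOn_apply hU ?_ fun z₀ hz₀ => ?_
  · rintro (x | s)
    · refine DifferentiableOn.congr (f := fun z => z * Complex.exp (z * x)) (by fun_prop)
        fun z hz => (he z hz).apply_inl x
    · refine DifferentiableOn.congr (f := fun z => ((s : ℂ) - z)⁻¹) (fun z hz => ?_)
        fun z hz => (he z hz).apply_inr s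
      have hsz : (s : ℂ) - z ≠ 0 := sub_ne_zero.2 fun h => hUK.notMem_of_mem_left hz (h ▸ s.2)
      fun_prop (disch := exact hsz)
  · obtain ⟨R, hR, hball⟩ := Metric.mem_nhds_iff.1 (hU.mem_nhds hz₀)
    refine ⟨max (‖z₀‖ + R / 2) (R / 2)⁻¹, ?_⟩
    filter_upwards [Metric.ball_mem_nhds z₀ (half_pos hR), hU.mem_nhds hz₀] with z hz hzU
    rw [mem_ball_iff_norm] at hz
    have hdist (s : ℂ) (hs : s ∈ K) : R / 2 ≤ ‖s - z‖ := by
      have hsR : R ≤ ‖s - z₀‖ := not_lt.1 fun h =>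
        hUK.notMem_of_mem_left (hball (mem_ball_iff_norm.2 h)) hs
      linarith [norm_sub_le_norm_sub_add_norm_sub s z z₀]
    refine ((he z hzU).norm_le (hU₀ z hzU) (half_pos hR) hdist).trans ?_
    gcongr
    linarith [norm_le_norm_add_norm_sub' z z₀]

/-- Pole pushing: to the left of `K` the exponentials can be truncated, and the identity theorem
modulo the closed subspace propagates membership to all of `U`. -/
lemma mem_topologicalClosure_testSubmodule_of_isExpPair {β : ℝ} (hK : IsCompact K)
    (hKβ : ∀ s ∈ K, β ≤ s.re) (hβ : β ≤ 0) (hU : IsOpen U) (hUc : IsPreconnected U)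
    (hU₀ : ∀ z ∈ U, z.re ≤ 0) (hUK : Disjoint U K) (he : ∀ z ∈ U, IsExpPair (e z) z)
    {z₀ : ℂ} (hz₀ : z₀ ∈ U) (hz₀β : z₀.re < β) (hz : z ∈ U) :
    e z ∈ (testSubmodule K).topologicalClosure := by
  refine mem_of_eventually_mem_of_differentiableOn (Submodule.isClosed_topologicalClosure _)
    (differentiableOn_of_isExpPair hU hU₀ hUK he) hU hUc hz₀ ?_ hz
  filter_upwards [hU.mem_nhds hz₀, Complex.continuous_re.continuousAt (Iio_mem_nhds hz₀β)]
    with z hz hzβ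
  exact (he z hz).mem_topologicalClosure_testSubmodule hK hKβ hβ hzβ

end Exponentials

section Rectangle

variable {α r : ℝ}

lemma Rbar_eq_reProdIm (α r : ℝ) : Rbar α r = Icc α 1 ×ℂ Icc (-r) r := by
  ext s
  simp [Rbar, Complex.mem_reProdIm, abs_le, and_assoc]

lemma isCompact_Rbar (α r : ℝ) : IsCompact (Rbar α r) :=
  Rbar_eq_reProdIm α r ▸ isCompact_Icc.reProdIm isCompact_Icc

lemma leftHalfPlane_sdiff_Rbar (hα : α ≤ 0) : {z : ℂ | z.re < 0} \ Rbar α r =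
    {z | z.re < α} ∪ {z | z.re < 0} ∩ {z | r < z.im} ∪ {z | z.re < 0} ∩ {z | z.im < -r} := by
  ext z
  simp only [Rbar, Set.mem_sdiff, mem_union, mem_inter_iff, mem_ofPred_eq, abs_le]
  grind

lemma isPreconnected_leftHalfPlane_sdiff_Rbar (hα : α ≤ 0) :
    IsPreconnected ({z : ℂ | z.re < 0} \ Rbar α r) := by
  rw [leftHalfPlane_sdiff_Rbar hα]
  refine ((convex_halfSpace_re_lt α).isPreconnected.union ⟨α - 1, r + 1⟩ ?_ ?_ ?_).union
    ⟨α - 1, -r - 1⟩ (.inl ?_) ?_ ?_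
  · simp
  · simp; linarith
  · exact ((convex_halfSpace_re_lt 0).inter (convex_halfSpace_im_gt r)).isPreconnected
  · simp
  · simp; linarith
  · exact ((convex_halfSpace_re_lt 0).inter (convex_halfSpace_im_lt (-r))).isPreconnected

lemma exists_isExpPair_family (hα : α ≤ 0) : ∃ e : ℂ → PairSpace (Rbar α r),
    ContinuousOn e ({z | z.re < 0} \ Rbar α r) ∧ ∀ z ∈ {z | z.re < 0} \ Rbar α r,
      IsExpPair (e z) z ∧ e z ∈ (testSubmodule (Rbar α r)).topologicalClosure := by
  have hK := isCompact_Rbar α r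
  choose! e he using fun (z : ℂ) (hz : z ∈ {z : ℂ | z.re < 0} \ Rbar α r) =>
    exists_isExpPair hK hz.1 hz.2
  have hU : IsOpen ({z : ℂ | z.re < 0} \ Rbar α r) :=
    (isOpen_lt Complex.continuous_re continuous_const).sdiff hK.isClosed
  have hU₀ : ∀ z ∈ {z : ℂ | z.re < 0} \ Rbar α r, z.re ≤ 0 := fun z hz => hz.1.le
  refine ⟨e, (differentiableOn_of_isExpPair hU hU₀ disjoint_sdiff_left he).continuousOn,
    fun z hz => ⟨he z hz, mem_topologicalClosure_testSubmodule_of_isExpPair hK (fun s hs => hs.1)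
      hα hU (isPreconnected_leftHalfPlane_sdiff_Rbar hα) hU₀ disjoint_sdiff_left he
      (z₀ := ⟨α - 1, 0⟩) ⟨(sub_one_lt α).trans_le hα, fun h => (sub_one_lt α).not_ge h.1⟩
      (sub_one_lt α) hz⟩⟩

end Rectangle

section Assembly

open Complex
open scoped Interval

variable {α r a b m ρ δ d : ℝ} {w : ℂ → ℂ}

lemma hairpin_subset_leftHalfPlane_sdiff_Rbar (ha : a < α) (hr : r < ρ) (ham : a ≤ m)
    (hm : m < 0) : hairpin ρ a m ⊆ {z | z.re < 0} \ Rbar α r := by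
  intro z hz
  refine ⟨?_, fun hzR => ?_⟩
  · have hre := (hairpin_subset right_mem_uIcc hz).1
    exact (uIcc_of_le ham ▸ hre).2.trans_lt hm
  · rcases hz with ⟨-, hz⟩ | ⟨hz, -⟩
    · rcases hz with (hz : z.im = -ρ) | (hz : z.im = ρ) <;> linarith [abs_le.1 hzR.2.2]
    · exact (hz ▸ ha).not_ge hzR.1

lemma isTestLimit_hairpinIntegral (hα : α ≤ 0) (ha : a < α) (hr : r < ρ) (ham : a ≤ m)
    (hm : m < 0) (hw : ContinuousOn w (hairpin ρ a m)) :
    IsTestLimit (Rbar α r) (fun x => hairpinIntegral (fun z => w z * (z * exp (z * x))) ρ a m)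
      (fun s => hairpinIntegral (fun z => w z * (s - z)⁻¹) ρ a m) := by
  obtain ⟨e, hecont, he⟩ := exists_isExpPair_family (r := r) hα
  have hsub := hairpin_subset_leftHalfPlane_sdiff_Rbar ha hr ham hm
  have hcont : ContinuousOn (fun z => w z • e z) (hairpin ρ a m) := hw.smul (hecont.mono hsub)
  have heval (y : Ici (0 : ℝ) ⊕ Rbar α r) : hairpinIntegral (fun z => w z • e z) ρ a m y =
      hairpinIntegral (fun z => w z * e z y) ρ a m :=
    (hairpinIntegral_clm_comp (BoundedContinuousFunction.evalCLM ℂ y) hcont).symm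
  have hrep : Represents (hairpinIntegral (fun z => w z • e z) ρ a m)
      (fun x => hairpinIntegral (fun z => w z * (z * exp (z * x))) ρ a m)
      (fun s => hairpinIntegral (fun z => w z * (s - z)⁻¹) ρ a m) :=
    ⟨fun x => (heval _).trans <| hairpinIntegral_congr fun z hz =>
        congrArg (w z * ·) ((he z (hsub hz)).1.apply_inl x),
      fun s => (heval _).trans <| hairpinIntegral_congr fun z hz =>
        congrArg (w z * ·) ((he z (hsub hz)).1.apply_inr s)⟩
  refine (hrep.mem_topologicalClosure_testSubmodule_iff (isCompact_Rbar α r)).1 ?_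
  exact hairpinIntegral_mem (Submodule.isClosed_topologicalClosure _) hcont fun z hz =>
    Submodule.smul_mem _ _ (he z (hsub hz)).2

lemma norm_hairpinIntegral_mul_exp_le (hw : DifferentiableOn ℂ w ([[a, m]] ×ℂ [[-ρ, ρ]]))
    (ham : a ≤ m) (hm : m ≤ 0) (hδ : ∀ z ∈ {m} ×ℂ [[-ρ, ρ]], ‖w z‖ ≤ δ) {x : ℝ} (hx : 0 ≤ x) :
    ‖hairpinIntegral (fun z => w z * (z * exp (z * x))) ρ a m‖ ≤
      δ * (|a| + |ρ|) * (2 * |ρ|) := by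
  rw [hairpinIntegral_eq_of_differentiableOn (b := m) (hw.fun_mul (by fun_prop)) right_mem_uIcc]
  refine (norm_hairpinIntegral_le (M := δ * (|a| + |ρ|)) fun z hz => ?_).trans_eq (by simp)
  obtain ⟨hre, him⟩ : z ∈ {m} ×ℂ [[-ρ, ρ]] := uIcc_self (a := m) ▸ hairpin_subset right_mem_uIcc hz
  have hwz := hδ z ⟨hre, him⟩
  have hδ₀ := (norm_nonneg _).trans hwz
  have hz : ‖z‖ ≤ |a| + |ρ| := by
    refine (norm_le_abs_re_add_abs_im z).trans (add_le_add ?_ ?_)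
    · rw [show z.re = m from hre]
      exact abs_le_abs_of_nonpos hm ham
    rcases mem_uIcc.1 him with him | him
    · exact (abs_le.2 him).trans (le_abs_self ρ)
    · exact (abs_le.2 ⟨by linarith, him.2⟩).trans (neg_le_abs ρ)
  have hexp : ‖exp (z * x)‖ ≤ 1 := by
    rw [norm_exp, re_mul_ofReal, Real.exp_le_one_iff, show z.re = m from hre]
    exact mul_nonpos_of_nonpos_of_nonneg hm hx
  rw [norm_mul, norm_mul]
  calc ‖w z‖ * (‖z‖ * ‖exp (z * x)‖) ≤ δ * ((|a| + |ρ|) * 1) := by gcongr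
    _ = δ * (|a| + |ρ|) := by ring

lemma norm_hairpinIntegral_mul_inv_sub_add_le {s : ℂ} (ha : a < s.re) (hd : 0 < d)
    (hb : d ≤ b - s.re) (hs : d ≤ ρ - |s.im|) (hm : m ∈ [[a, b]])
    (hw : DifferentiableOn ℂ w ([[a, b]] ×ℂ [[-ρ, ρ]])) (hδ : ∀ z ∈ hairpin ρ b m, ‖w z‖ ≤ δ) :
    ‖hairpinIntegral (fun z => w z * (s - z)⁻¹) ρ a m + 2 * Real.pi * I * w s‖ ≤
      d⁻¹ * δ * (2 * |b - a| + 2 * |ρ|) := by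
  have hkernel (z : ℂ) : w z * (s - z)⁻¹ = (z - s)⁻¹ • -w z := by
    rw [← neg_sub z s, inv_neg, smul_eq_mul]
    ring
  have hcauchy := hairpinIntegral_inv_sub_smul_sub ha (by linarith) (by linarith) hm hw.fun_neg
  rw [sub_eq_iff_eq_add', smul_eq_mul, mul_neg, ← sub_eq_add_neg, eq_sub_iff_add_eq] at hcauchy
  simp only [hkernel, hcauchy]
  have hδ₀ : 0 ≤ δ := (norm_nonneg _).trans (hδ _ (side_mem_hairpin right_mem_uIcc))
  refine (norm_hairpinIntegral_le (M := d⁻¹ * δ) fun z hz => ?_).trans (by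
    rw [abs_sub_comm m]
    gcongr ?_ * (2 * ?_ + _)
    exact abs_sub_right_of_mem_uIcc hm)
  have hdz : d ≤ ‖z - s‖ := le_norm_sub_of_mem_hairpin hz (hb.trans (le_abs_self _)) hs
  rw [norm_smul, norm_inv, norm_neg]
  gcongr
  exact hδ z hz

lemma norm_inv_two_pi_I_le_one : ‖(2 * Real.pi * I : ℂ)⁻¹‖ ≤ 1 := by
  rw [norm_inv, norm_mul, norm_mul, norm_I, mul_one, norm_ofNat,
    Complex.norm_of_nonneg Real.pi_nonneg]
  exact inv_le_one_of_one_le₀ (by linarith [Real.pi_gt_three])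

/-- In the Cauchy integral of `D` over the boundary of the rectangle, the hairpin to the right of
`Re z = m` contributes little, and the one to the left is the Laplace transform of a superposition
of exponentials, whose derivative is small because the contour can be moved to `Re z = m`. -/
lemma exists_isTestLimit_near (hα : α ≤ 0) (hr : 0 ≤ r) (ha : a < α) (hb : 1 < b) (hρ : r < ρ) :
    ∃ C, ∀ (D : ℂ → ℂ) (m δ : ℝ), a ≤ m → m < 0 →
      DifferentiableOn ℂ D (Icc a b ×ℂ Icc (-ρ) ρ) →
      (∀ z ∈ Icc m b ×ℂ Icc (-ρ) ρ, ‖D z‖ ≤ δ) →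
      ∃ f g, IsTestLimit (Rbar α r) f g ∧ (∀ x ≥ 0, ‖f x‖ ≤ C * δ) ∧
        ∀ s ∈ Rbar α r, ‖D s - g s‖ ≤ C * δ := by
  set d := min (b - 1) (ρ - r)
  have hd : 0 < d := lt_min (by linarith) (by linarith)
  set C₁ := (|a| + |ρ|) * (2 * |ρ|)
  set C₂ := d⁻¹ * (2 * |b - a| + 2 * |ρ|)
  refine ⟨max C₁ C₂, fun D m δ ham hm hD hδ => ?_⟩
  have hδ₀ : 0 ≤ δ := (norm_nonneg _).trans
    (hδ m ⟨⟨by simp, by simp; linarith⟩, by simp; linarith, by simp; linarith⟩)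
  rw [← uIcc_of_le (show a ≤ b by linarith), ← uIcc_of_le (show -ρ ≤ ρ by linarith)] at hD
  have hmab : m ∈ [[a, b]] := mem_uIcc_of_le ham (by linarith)
  set w : ℂ → ℂ := fun z => -(2 * Real.pi * I)⁻¹ * D z with hw_def
  have hw : DifferentiableOn ℂ w ([[a, b]] ×ℂ [[-ρ, ρ]]) := hD.const_mul _
  have hwδ (z : ℂ) (hz : z ∈ [[m, b]] ×ℂ [[-ρ, ρ]]) : ‖w z‖ ≤ δ := by
    rw [uIcc_of_le (show m ≤ b by linarith), uIcc_of_le (show -ρ ≤ ρ by linarith)] at hz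
    rw [norm_mul, norm_neg]
    exact (mul_le_of_le_one_left (norm_nonneg _) norm_inv_two_pi_I_le_one).trans (hδ z hz)
  have hDw (s : ℂ) : D s = -(2 * Real.pi * I * w s) := by
    rw [hw_def]
    field_simp [two_pi_I_ne_zero]
  refine ⟨_, _, isTestLimit_hairpinIntegral hα ha hρ ham hm
    (hw.continuousOn.mono (hairpin_subset hmab)), fun x hx => ?_, fun s hs => ?_⟩
  · have hexp := norm_hairpinIntegral_mul_exp_le (hw.mono <| reProdIm_subset_iff.2 <|
      prod_mono (uIcc_subset_uIcc_left hmab) subset_rfl) ham hm.le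
      (fun z hz => hwδ z ⟨(show z.re = m from hz.1) ▸ left_mem_uIcc, hz.2⟩) hx
    calc _ ≤ C₁ * δ := hexp.trans_eq (by ring)
      _ ≤ max C₁ C₂ * δ := by gcongr; exact le_max_left _ _
  · have hcauchy := norm_hairpinIntegral_mul_inv_sub_add_le (ha.trans_le hs.1) hd
      ((min_le_left _ _).trans (by linarith [hs.2.1]))
      ((min_le_right _ _).trans (by linarith [hs.2.2])) hmab hw fun z hz =>
        hwδ z (uIcc_comm b m ▸ hairpin_subset right_mem_uIcc hz)
    rw [hDw, ← norm_neg, neg_sub, sub_neg_eq_add]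
    calc _ ≤ C₂ * δ := hcauchy.trans_eq (by ring)
      _ ≤ max C₁ C₂ * δ := by gcongr; exact le_max_right _ _

lemma exists_neg_forall_norm_le {D : ℂ → ℂ} {S : Set ℝ} (ha : a < 0) (hb : 0 < b)
    (hD : UniformContinuousOn D (Icc a b ×ℂ S)) (hδ : 0 < δ)
    (hpos : ∀ z ∈ Ioc 0 b ×ℂ S, ‖D z‖ < δ) :
    ∃ m, a ≤ m ∧ m < 0 ∧ ∀ z ∈ Icc m b ×ℂ S, ‖D z‖ ≤ 2 * δ := by
  obtain ⟨θ, hθ, hDθ⟩ := Metric.uniformContinuousOn_iff.1 hD δ hδ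
  obtain ⟨c, hc, hc_lt⟩ := exists_between (show 0 < min (θ / 2) (min (b / 2) (-a)) by
    simp [hθ, hb, ha])
  simp only [lt_inf_iff] at hc_lt
  refine ⟨-c, by linarith, by linarith, fun z ⟨hre, him⟩ => ?_⟩
  obtain ⟨hz₁, hz₂⟩ : -c ≤ z.re ∧ z.re ≤ b := hre
  rcases lt_or_ge 0 z.re with hz | hz
  · linarith [hpos z ⟨⟨hz, hz₂⟩, him⟩]
  · have hshift : (z + (2 * c : ℝ)).re = z.re + 2 * c := by simp
    have hw : z + (2 * c : ℝ) ∈ Ioc 0 b ×ℂ S :=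
      ⟨⟨by rw [hshift]; linarith, by rw [hshift]; linarith⟩, by simpa using him⟩
    have hclose := hDθ z ⟨⟨by linarith, hz₂⟩, him⟩ _ ⟨⟨ha.le.trans hw.1.1.le, hw.1.2⟩, hw.2⟩ (by
      rw [dist_self_add_right, Complex.norm_of_nonneg (by linarith)]
      linarith)
    rw [dist_eq_norm] at hclose
    linarith [hpos _ hw, norm_sub_norm_le (D z) (D (z + (2 * c : ℝ)))]

lemma HasC0Deriv.isTestLimit_of_differentiableOn {τ τ' : ℝ → ℂ} {F : ℂ → ℂ} {ρ₁ : ℝ}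
    (h : HasC0Deriv τ τ') (hα : α ≤ 0) (hr : 0 ≤ r) (ha : a < α) (hb : 1 < b) (hρ₁ : r < ρ₁)
    (hF : DifferentiableOn ℂ F (Icc a b ×ℂ Icc (-ρ₁) ρ₁))
    (hFeq : ∀ s ∈ Icc a b ×ℂ Icc (-ρ₁) ρ₁, 0 < s.re → F s = Laplace τ s) :
    IsTestLimit (Rbar α r) τ' F := by
  obtain ⟨ρ, hρ, hρρ₁⟩ := exists_between hρ₁
  obtain ⟨C, hC⟩ := exists_isTestLimit_near hα hr ha hb hρ
  have hright : Ioc 0 b ×ℂ Icc (-ρ₁) ρ₁ ⊆ Icc a b ×ℂ Icc (-ρ₁) ρ₁ :=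
    reProdIm_subset_iff.2 (prod_mono (fun x hx => ⟨by linarith [hx.1], hx.2⟩) subset_rfl)
  have huc : UniformContinuousOn (Laplace τ) (Ioc 0 b ×ℂ Icc (-ρ₁) ρ₁) :=
    (((isCompact_Icc.reProdIm isCompact_Icc).uniformContinuousOn_of_continuous
      hF.continuousOn).mono hright).congr fun s hs => hFeq s (hright hs) hs.1.1
  refine .of_forall_exists_near fun ε hε => ?_
  obtain ⟨δ, hδ, hδε⟩ := exists_pos_mul_lt hε (1 + 2 * |C|)
  obtain ⟨σ, σ', hσ, hder, hlap⟩ := h.exists_isTest_near_of_uniformContinuousOn hρρ₁ huc hδ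
  have hsub : Icc a b ×ℂ Icc (-ρ) ρ ⊆ Icc a b ×ℂ Icc (-ρ₁) ρ₁ :=
    reProdIm_subset_iff.2 (prod_mono subset_rfl (Icc_subset_Icc (by linarith) hρρ₁.le))
  have hD : DifferentiableOn ℂ (fun s => F s - Laplace σ s) (Icc a b ×ℂ Icc (-ρ) ρ) :=
    (hF.mono hsub).sub hσ.differentiable_laplace.differentiableOn
  obtain ⟨m, ham, hm, hDm⟩ := exists_neg_forall_norm_le (ha.trans_le hα) (by linarith)
    ((isCompact_Icc.reProdIm isCompact_Icc).uniformContinuousOn_of_continuous hD.continuousOn)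
    hδ fun z hz => by
      rw [hFeq z (hsub ⟨⟨by linarith [hz.1.1], hz.1.2⟩, hz.2⟩) hz.1.1]
      exact hlap z hz
  obtain ⟨f, g, hfg, hf, hg⟩ := hC _ m (2 * δ) ham hm hD hDm
  have hCδ : C * (2 * δ) ≤ |C| * (2 * δ) := by gcongr; exact le_abs_self C
  refine ⟨_, _, hfg.isTest_add hσ, fun x hx => ?_, fun s hs => ?_⟩
  · rw [← sub_sub]
    linarith [norm_sub_le (τ' x - σ' x) (f x), hder x hx, hf x hx]
  · rw [← sub_sub]
    linarith [hg s hs]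

end Assembly

lemma Ropen_subset_Rbar (α r : ℝ) : Ropen α r ⊆ Rbar α r :=
  fun _ hs => ⟨hs.1.le, hs.2.1.le, hs.2.2.le⟩

lemma div_ofReal_mem_Rbar {α r l : ℝ} {s : ℂ} (hα : α ≤ 0) (hl : 1 ≤ l) (hs : s ∈ Rbar α r) :
    s / l ∈ Rbar α r := by
  have hl₀ : 0 < l := one_pos.trans_le hl
  have hr : 0 ≤ r := (abs_nonneg _).trans hs.2.2
  rw [Rbar, mem_ofPred_eq, Complex.div_ofReal_re, Complex.div_ofReal_im, le_div_iff₀ hl₀,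
    div_le_one hl₀, abs_div, abs_of_pos hl₀, div_le_iff₀ hl₀]
  exact ⟨by nlinarith [hs.1], hs.2.1.trans hl,
    hs.2.2.trans (le_mul_of_one_le_right hr hl)⟩

lemma div_ofReal_mem_Ropen {α r k l : ℝ} {s : ℂ} (hα : α < 0) (hr : 0 < r) (hk : 0 < k)
    (hkl : k < l) (hs : s ∈ Icc (k * α) k ×ℂ Icc (-(k * r)) (k * r)) : s / l ∈ Ropen α r := by
  have hl₀ : 0 < l := hk.trans hkl
  obtain ⟨⟨hre₁, hre₂⟩, him⟩ := hs
  rw [Ropen, mem_ofPred_eq, Complex.div_ofReal_re, Complex.div_ofReal_im, lt_div_iff₀ hl₀,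
    div_lt_one hl₀, abs_div, abs_of_pos hl₀, div_lt_iff₀ hl₀]
  exact ⟨by nlinarith, hre₂.trans_lt hkl, (abs_le.2 him).trans_lt (by nlinarith)⟩

lemma HasC0Deriv.isTestLimit_Rbar {α r : ℝ} {τ τ' : ℝ → ℂ} {F : ℂ → ℂ} (h : HasC0Deriv τ τ')
    (hα : α < 0) (hr : 0 < r) (hF : DifferentiableOn ℂ F (Ropen α r))
    (hFcont : ContinuousOn F (Rbar α r))
    (hFeq : ∀ s ∈ Rbar α r, 0 < s.re → F s = Laplace τ s) :
    IsTestLimit (Rbar α r) τ' F := by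
  refine .of_forall_exists_near fun ε hε => ?_
  have hdil := tendstoUniformlyOn_comp_div (isCompact_Rbar α r)
    (fun l hl s => div_ofReal_mem_Rbar hα.le hl) hFcont
  have hnear := (Metric.tendstoUniformlyOn_iff.1 h.tendstoUniformlyOn_comp_mul_left ε hε).and
    (Metric.tendstoUniformlyOn_iff.1 hdil ε hε)
  obtain ⟨l, ⟨hder, hlap⟩, hl⟩ := ((hnear.filter_mono
    (nhdsWithin_mono 1 Ioi_subset_Ici_self)).and self_mem_nhdsWithin).exists
  have hl₀ : 0 < l := one_pos.trans hl
  obtain ⟨k, hk, hkl⟩ := exists_between (show 1 < l from hl)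
  have hmem {s : ℂ} := div_ofReal_mem_Ropen (s := s) hα hr (one_pos.trans hk) hkl
  refine ⟨_, _, (h.comp_mul_left hl₀).isTestLimit_of_differentiableOn (F := fun s => F (s / l))
    hα.le hr.le (a := k * α) (by nlinarith) hk (ρ₁ := k * r) (by nlinarith) ?_ fun s hs hre => ?_,
    fun x hx => dist_eq_norm (τ' x) _ ▸ hder x hx, fun s hs => dist_eq_norm (F s) _ ▸ hlap s hs⟩
  · exact hF.comp (by fun_prop) fun s => hmem
  · rw [laplace_comp_mul_left hl₀]
    refine hFeq _ (Ropen_subset_Rbar α r (hmem hs)) ?_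
    rw [Complex.div_ofReal_re]
    positivity

/-- `V_{-∞}` is dense in the Banach space `V_{α,r}`: every `τ ∈ V_{α,r}` (with
extension `F` of its Laplace transform) can be approximated in the norm
`‖τ‖_{α,r} = sup_{x≥0}|τ'(x)| + sup_{s∈R̄_{α,r}}|F(s)|` by functions `σ ∈ V_{-∞}`
whose Laplace transforms extend to entire functions `G`. -/
theorem Vminusinfty_dense_in_Valphar
    (α r : ℝ) (hα : α < 0) (hr : 0 < r)
    (τ τ' : ℝ → ℂ) (F : ℂ → ℂ)
    (hder : ∀ x ∈ Set.Ici (0 : ℝ), HasDerivWithinAt τ (τ' x) (Set.Ici 0) x)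
    (hcont : ContinuousOn τ' (Set.Ici 0))
    (hto0 : Tendsto τ' atTop (nhds 0))
    (hFan : DifferentiableOn ℂ F (Ropen α r))
    (hFcont : ContinuousOn F (Rbar α r))
    (hFeq : ∀ s ∈ Rbar α r, 0 < s.re → F s = Laplace τ s)
    (ε : ℝ) (hε : 0 < ε) :
    ∃ (σ σ' : ℝ → ℂ) (G : ℂ → ℂ),
      (∀ x ∈ Set.Ici (0 : ℝ), HasDerivWithinAt σ (σ' x) (Set.Ici 0) x) ∧
      ContinuousOn σ' (Set.Ici 0) ∧
      Tendsto σ' atTop (nhds 0) ∧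
      Differentiable ℂ G ∧
      (∀ s : ℂ, 0 < s.re → G s = Laplace σ s) ∧
      ∃ ε₁ ε₂ : ℝ, 0 ≤ ε₁ ∧ 0 ≤ ε₂ ∧ ε₁ + ε₂ < ε ∧
        (∀ x : ℝ, 0 ≤ x → ‖τ' x - σ' x‖ ≤ ε₁) ∧
        (∀ s ∈ Rbar α r, ‖F s - G s‖ ≤ ε₂) := by
  obtain ⟨σ, σ', hσ, hder_near, hlap_near⟩ :=
    (HasC0Deriv.mk hder hcont hto0).isTestLimit_Rbar hα hr hFan hFcont hFeq (ε / 3) (by positivity)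
  exact ⟨σ, σ', Laplace σ, hσ.hasDerivWithinAt, hσ.continuousOn_deriv, hσ.tendsto_deriv,
    hσ.differentiable_laplace, fun _ _ => rfl, ε / 3, ε / 3, by positivity, by positivity,
    by linarith, fun x hx => (hder_near x hx).le, fun s hs => (hlap_near s hs).le⟩
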